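/- Every strongly invertible link in ℝ³ is equivalent, through a smooth family of strongly invertible links, to a strongly invertible Legendrian link. Precisely: for every strongly invertible link L₀ : Fin n × 𝕊¹ → ℝ³ there exists a smooth map H : ℝ × (Fin n × 𝕊¹) → ℝ³ such that H(0,·) = L₀, for every t ∈ [0,1] the map H(t,·) is a strongly invertible link, and H(1,·) is a strongly invertible Legendrian link. -/

import Mathlib

open scoped Manifold

noncomputable section

/-- ℝ³ with coordinates (x, y, z). -/
abbrev R3 : Type := ℝ × ℝ × ℝ

/-- 𝕊¹, the unit circle in ℝ². -/
abbrev S1 : Type := Metric.sphere (0 : EuclideanSpace ℝ (Fin 2)) 1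

/-- The involution τ(x,y,z) = (x, −y, −z). -/
def tau (p : R3) : R3 := (p.1, -p.2.1, -p.2.2)

/-- The contact form of the standard contact structure: α_p(v) = v_z − p_y · v_x;
its kernel at p is the contact plane ξ_st(p). -/
def alphaForm (p v : R3) : ℝ := v.2.2 - p.2.1 * v.1

/-- The x-axis {(x,0,0) : x ∈ ℝ} ⊆ ℝ³, the fixed-point set of τ. -/
def xAxisSet : Set R3 := {p | p.2.1 = 0 ∧ p.2.2 = 0}

/-- An n-component link: a smooth injective immersion `Fin n × 𝕊¹ → ℝ³`
(recorded as a family of maps `𝕊¹ → ℝ³`, jointly injective). -/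
def IsLink {n : ℕ} (L : Fin n → S1 → R3) : Prop :=
  (∀ i, ContMDiff (𝓡 1) 𝓘(ℝ, R3) (⊤ : ℕ∞) (L i)) ∧
  Function.Injective (fun q : Fin n × S1 => L q.1 q.2) ∧
  ∀ i s, Function.Injective (mfderiv (𝓡 1) 𝓘(ℝ, R3) (L i) s)

/-- A link is Legendrian if every tangent vector of every component lies in the kernel of
the contact form at the corresponding point. -/
def IsLegendrianLink {n : ℕ} (L : Fin n → S1 → R3) : Prop :=
  IsLink L ∧
    ∀ i s (v : EuclideanSpace ℝ (Fin 1)),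
      alphaForm (L i s) (mfderiv (𝓡 1) 𝓘(ℝ, R3) (L i) s v) = 0

/-- A link is strongly invertible if τ maps the image of each component onto itself and
that image meets the x-axis in exactly two points. -/
def IsStronglyInvertibleLink {n : ℕ} (L : Fin n → S1 → R3) : Prop :=
  IsLink L ∧
    ∀ i, tau '' Set.range (L i) = Set.range (L i) ∧
      (Set.range (L i) ∩ xAxisSet).encard = 2

/-- A strongly invertible Legendrian link. -/
def IsStronglyInvertibleLegendrianLink {n : ℕ} (L : Fin n → S1 → R3) : Prop :=
  IsStronglyInvertibleLink L ∧ IsLegendrianLink L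

/-!
Write `ℝ³ = ℝ × ℂ` with `w = y + iz`, so that `τ(x, w) = (x, -w)`. Reparametrize each component so
that `τ` acts on it by `s ↦ -s`; every construction is equivariant under this symmetry.

Rotating `w` through an angle proportional to `x` turns the contact planes quickly: under
`(x, w) ↦ (θ, e^{iθ} w)` with `θ = N x + φ`, a curve is Legendrian exactly when `w'` is a real
multiple of `e^{-iθ}`, and this twist is isotopic to the identity through maps commuting with `τ`.
So it is enough to perturb a curve `(x, w)` to one of this kind for `N` large. Project `w'` onto
`ℝ e^{-iθ}`, double the result, and integrate. If `x` has finitely many critical points, which by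
Sard's theorem can be arranged by adding `l cos s` to it, then the phase `θ` averages the projection
and the primitive is `C⁰`-close to `w`. The linear interpolation to the new curve stays embedded:
away from the critical points of `x` because `x` is unchanged, and near them because `w'` is
flattened to a constant there and `φ` is chosen to make the new derivative advance in its direction.
-/

section

open Filter Function MeasureTheory Set Topology
open scoped ComplexConjugate ContDiff InnerProductSpace Real Interval

/-! ### Oscillatory integrals -/

theorem hasDerivAt_coe_circleExp (θ : ℝ) :
    HasDerivAt (fun θ : ℝ ↦ (Circle.exp θ : ℂ)) (Circle.exp θ * Complex.I) θ := by
  simpa [Circle.coe_exp] using ((hasDerivAt_id θ).ofReal_comp.mul_const Complex.I).cexp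

theorem contDiff_coe_circleExp {n : WithTop ℕ∞} :
    ContDiff ℝ n fun θ : ℝ ↦ (Circle.exp θ : ℂ) := by
  simp only [Circle.coe_exp]
  exact (Complex.ofRealCLM.contDiff.mul contDiff_const).cexp

theorem continuous_coe_circleExp : Continuous fun θ : ℝ ↦ (Circle.exp θ : ℂ) :=
  contDiff_coe_circleExp.continuous (n := 0)

theorem norm_integral_le_integral_of_norm_le {E : Type*} [NormedAddCommGroup E] [NormedSpace ℝ E]
    {f : ℝ → E} {g : ℝ → ℝ} {a b s : ℝ} (hfg : ∀ u ∈ Icc a b, ‖f u‖ ≤ g u)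
    (hg : IntervalIntegrable g volume a b) (hs : s ∈ Icc a b) :
    ‖∫ u in a..s, f u‖ ≤ ∫ u in a..b, g u := by
  have hsub : uIcc a s ⊆ uIcc a b := uIcc_subset_uIcc_left (Icc_subset_uIcc hs)
  calc ‖∫ u in a..s, f u‖ ≤ ∫ u in a..s, g u :=
        intervalIntegral.norm_integral_le_of_norm_le hs.1
          (ae_of_all _ fun u hu ↦ hfg u ⟨hu.1.le, hu.2.trans hs.2⟩) (hg.mono_set hsub)
    _ ≤ ∫ u in a..b, g u := by
        refine intervalIntegral.integral_mono_interval le_rfl hs.1 hs.2 ?_ hg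
        filter_upwards [ae_restrict_mem measurableSet_Ioc] with u hu
        exact (norm_nonneg _).trans (hfg u ⟨hu.1.le, hu.2⟩)

theorem tendsto_integral_div_sq_add {g : ℝ → ℝ} {a b : ℝ} (hg : Continuous g)
    (hg0 : ∀ᵐ u, u ∈ Ι a b → g u ≠ 0) :
    Tendsto (fun δ ↦ ∫ u in a..b, δ / (g u ^ 2 + δ)) (𝓝[>] 0) (𝓝 0) := by
  have hlim : Tendsto (fun δ ↦ ∫ u in a..b, δ / (g u ^ 2 + δ)) (𝓝[>] 0)
      (𝓝 (∫ _ in a..b, (0 : ℝ))) := by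
    refine intervalIntegral.tendsto_integral_filter_of_dominated_convergence (fun _ ↦ 1) ?_ ?_
      intervalIntegrable_const ?_
    · filter_upwards [self_mem_nhdsWithin] with δ (hδ : 0 < δ)
      exact (continuous_const.div (by fun_prop) fun u ↦ by positivity).aestronglyMeasurable
    · filter_upwards [self_mem_nhdsWithin] with δ (hδ : 0 < δ)
      refine ae_of_all _ fun u _ ↦ ?_
      rw [Real.norm_of_nonneg (by positivity), div_le_one (by positivity)]
      exact le_add_of_nonneg_left (sq_nonneg _)
    · filter_upwards [hg0] with u hu hmem
      have hcont : ContinuousAt (fun δ : ℝ ↦ δ / (g u ^ 2 + δ)) 0 :=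
        continuousAt_id.div (by fun_prop) (by simpa using hu hmem)
      simpa using hcont.tendsto.mono_left nhdsWithin_le_nhds
  simpa only [intervalIntegral.integral_zero] using hlim

theorem exists_norm_integral_mul_deriv_mul_circleExp_le {G : ℝ → ℂ} {x : ℝ → ℝ}
    (hG : ContDiff ℝ 1 G) (hx : ContDiff ℝ 1 x) (a b : ℝ) :
    ∃ C, ∀ N > 0, ∀ s ∈ Icc a b,
      ‖∫ u in a..s, G u * (deriv x u * Circle.exp (N * x u))‖ ≤ C / N := by
  have hG' : Continuous (deriv G) := hG.continuous_deriv le_rfl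
  have hx' : Continuous (deriv x) := hx.continuous_deriv le_rfl
  obtain ⟨A, hA⟩ := isCompact_Icc (a := a) (b := b).exists_bound_of_continuousOn
    hG.continuous.continuousOn
  obtain ⟨B, hB⟩ := isCompact_Icc (a := a) (b := b).exists_bound_of_continuousOn
    hG'.continuousOn
  refine ⟨A + A + (b - a) * B, fun N hN s hs ↦ ?_⟩
  have ha : a ∈ Icc a b := ⟨le_rfl, hs.1.trans hs.2⟩
  set e : ℝ → ℂ := fun u ↦ Circle.exp (N * x u)
  have he_norm (u : ℝ) : ‖e u‖ = 1 := Circle.norm_coe _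
  have he_cont : Continuous e :=
    continuous_coe_circleExp.comp (continuous_const.mul hx.continuous)
  have he_deriv (u : ℝ) : HasDerivAt e (N * Complex.I * (deriv x u * e u)) u := by
    refine ((hasDerivAt_coe_circleExp (N * x u)).scomp u
      (((hx.differentiable one_ne_zero) u).hasDerivAt.const_mul N)).congr_deriv ?_
    rw [Complex.real_smul, Complex.ofReal_mul]
    ring
  have hparts : N * Complex.I * ∫ u in a..s, G u * (deriv x u * e u) =
      G s * e s - G a * e a - ∫ u in a..s, deriv G u * e u := by
    rw [← intervalIntegral.integral_mul_deriv_eq_deriv_mul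
      (fun u _ ↦ ((hG.differentiable one_ne_zero) u).hasDerivAt) (fun u _ ↦ he_deriv u)
      (hG'.intervalIntegrable _ _) (by apply Continuous.intervalIntegrable; fun_prop),
      ← intervalIntegral.integral_const_mul]
    exact intervalIntegral.integral_congr fun u _ ↦ by ring
  have hint : ‖∫ u in a..s, deriv G u * e u‖ ≤ (b - a) * B := by
    simpa using norm_integral_le_integral_of_norm_le (g := fun _ ↦ B)
      (fun u hu ↦ by simpa only [norm_mul, he_norm, mul_one] using hB u hu)
      intervalIntegrable_const hs
  have hbound : ‖N * Complex.I * ∫ u in a..s, G u * (deriv x u * e u)‖ ≤ A + A + (b - a) * B := by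
    rw [hparts]
    refine (norm_sub_le_of_le (norm_sub_le_of_le ?_ ?_) hint)
    · simpa only [norm_mul, he_norm, mul_one] using hA s hs
    · simpa only [norm_mul, he_norm, mul_one] using hA a ha
  rw [le_div_iff₀ hN, mul_comm]
  simpa only [norm_mul, Complex.norm_I, mul_one, Complex.norm_real, Real.norm_of_nonneg hN.le]
    using hbound

/- Multiplying and dividing by `x' ^ 2 + δ` splits `f` into `G * x'` with `G` of class `C¹`, to
which integration by parts applies, and a remainder `f * δ / (x' ^ 2 + δ)` of small integral. -/
theorem exists_norm_integral_mul_circleExp_le {f : ℝ → ℂ} {x : ℝ → ℝ} {a b F δ : ℝ}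
    (hf : ContDiff ℝ 1 f) (hx : ContDiff ℝ 2 x) (hF : ∀ u ∈ Icc a b, ‖f u‖ ≤ F) (hδ : 0 < δ) :
    ∃ C, ∀ N > 0, ∀ s ∈ Icc a b, ‖∫ u in a..s, f u * Circle.exp (N * x u)‖ ≤
      C / N + F * ∫ u in a..b, δ / (deriv x u ^ 2 + δ) := by
  have hx' : ContDiff ℝ 1 (deriv x) := hx.deriv'
  have hpos (u : ℝ) : deriv x u ^ 2 + δ ≠ 0 := by positivity
  have hρ : Continuous fun u ↦ δ / (deriv x u ^ 2 + δ) :=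
    continuous_const.div (by fun_prop) hpos
  set G : ℝ → ℂ := fun u ↦ f u * ((deriv x u / (deriv x u ^ 2 + δ) : ℝ) : ℂ)
  have hG : ContDiff ℝ 1 G :=
    hf.mul (Complex.ofRealCLM.contDiff.comp (hx'.div ((hx'.pow 2).add contDiff_const) hpos))
  obtain ⟨C, hC⟩ := exists_norm_integral_mul_deriv_mul_circleExp_le hG
    (hx.of_le one_le_two) a b
  refine ⟨C, fun N hN s hs ↦ ?_⟩
  have he : Continuous fun u ↦ (Circle.exp (N * x u) : ℂ) :=
    continuous_coe_circleExp.comp (continuous_const.mul hx.continuous)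
  have hsplit : ∫ u in a..s, f u * Circle.exp (N * x u) =
      (∫ u in a..s, G u * (deriv x u * Circle.exp (N * x u))) +
        ∫ u in a..s, f u * Circle.exp (N * x u) * ((δ / (deriv x u ^ 2 + δ) : ℝ) : ℂ) := by
    rw [← intervalIntegral.integral_add]
    · refine intervalIntegral.integral_congr fun u _ ↦ ?_
      have h : ((deriv x u : ℝ) : ℂ) ^ 2 + δ ≠ 0 := mod_cast hpos u
      simp only [G]
      push_cast
      field_simp
    all_goals
      have := hf.continuous
      have := hG.continuous
      have := hx'.continuous
      apply Continuous.intervalIntegrable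
      fun_prop
  rw [hsplit, ← intervalIntegral.integral_const_mul]
  refine norm_add_le_of_le (hC N hN s hs) (norm_integral_le_integral_of_norm_le (fun u hu ↦ ?_)
    ((hρ.const_mul F).intervalIntegrable _ _) hs)
  rw [norm_mul, norm_mul, Circle.norm_coe, mul_one, Complex.norm_real,
    Real.norm_of_nonneg (by positivity)]
  exact mul_le_mul_of_nonneg_right (hF u hu) (by positivity)

theorem tendstoUniformlyOn_integral_mul_circleExp {f : ℝ → ℂ} {x : ℝ → ℝ} {a b : ℝ}
    (hf : ContDiff ℝ 1 f) (hx : ContDiff ℝ 2 x) (hx0 : ∀ᵐ u, u ∈ Ι a b → deriv x u ≠ 0) :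
    TendstoUniformlyOn (fun N s ↦ ∫ u in a..s, f u * Circle.exp (N * x u)) 0 atTop (Icc a b) := by
  rw [Metric.tendstoUniformlyOn_iff]
  intro ε hε
  obtain ⟨F, hF⟩ := isCompact_Icc (a := a) (b := b).exists_bound_of_continuousOn
    hf.continuous.continuousOn
  have hlim := (tendsto_integral_div_sq_add (hx.continuous_deriv one_le_two) hx0).const_mul F
  rw [mul_zero] at hlim
  obtain ⟨δ, hsmall, hδ⟩ :=
    ((hlim.eventually_lt_const (half_pos hε)).and self_mem_nhdsWithin).exists
  obtain ⟨C, hC⟩ := exists_norm_integral_mul_circleExp_le hf hx hF hδ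
  filter_upwards [eventually_gt_atTop 0, (tendsto_const_nhds (x := C)).div_atTop tendsto_id
    |>.eventually_lt_const (half_pos hε)] with N hN hCN s hs
  rw [Pi.zero_apply, dist_zero_left]
  calc _ ≤ C / N + F * ∫ u in a..b, δ / (deriv x u ^ 2 + δ) := hC N hN s hs
    _ < ε / 2 + ε / 2 := add_lt_add hCN hsmall
    _ = ε := add_halves ε

/-! ### Perturbing to finitely many critical points -/

theorem finite_zeros_of_deriv_ne_zero {E : Type*} [NormedAddCommGroup E] [NormedSpace ℝ E]
    {f : ℝ → E} {K : Set ℝ} (hK : IsCompact K) (hf : Differentiable ℝ f)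
    (hf' : ∀ s ∈ K, f s = 0 → deriv f s ≠ 0) : {s ∈ K | f s = 0}.Finite := by
  by_contra hinf
  obtain ⟨s, hs, hacc⟩ :=
    Set.Infinite.exists_accPt_of_subset_isCompact hinf hK fun s hs ↦ hs.1
  rw [accPt_iff_frequently] at hacc
  have hfs : f s = 0 := by
    by_contra hne
    obtain ⟨t, ⟨-, -, ht⟩, ht'⟩ :=
      (hacc.and_eventually (hf.continuous.continuousAt.eventually_ne hne)).exists
    exact ht' ht
  have hne : ∀ᶠ t in 𝓝[≠] s, f t ≠ 0 := (hf s).hasDerivAt.eventually_ne (hf' s hs hfs)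
  obtain ⟨t, ⟨hts, -, ht⟩, ht'⟩ := (hacc.and_eventually (eventually_nhdsWithin_iff.1 hne)).exists
  exact ht' hts ht

theorem countable_zeros_of_deriv_ne_zero {E : Type*} [NormedAddCommGroup E] [NormedSpace ℝ E]
    {f : ℝ → E} (hf : Differentiable ℝ f) (hf' : ∀ s, f s = 0 → deriv f s ≠ 0) :
    {s | f s = 0}.Countable := by
  have hunion : {s | f s = 0} = ⋃ n : ℕ, {s ∈ Icc (-n : ℝ) n | f s = 0} := by
    ext s
    obtain ⟨n, hn⟩ := exists_nat_ge |s|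
    simpa using fun _ ↦ ⟨n, abs_le.1 hn⟩
  rw [hunion]
  exact countable_iUnion fun n ↦
    (finite_zeros_of_deriv_ne_zero isCompact_Icc hf fun s _ ↦ hf' s).countable

theorem measure_image_setOf_deriv_eq_zero (f : ℝ → ℝ) :
    volume (f '' {s | DifferentiableAt ℝ f s ∧ deriv f s = 0}) = 0 := by
  refine addHaar_image_eq_zero_of_det_fderivWithin_eq_zero volume
    (f' := fun _ ↦ (0 : ℝ →L[ℝ] ℝ)) (fun s hs ↦ ?_) fun s _ ↦ by simp [ContinuousLinearMap.det]
  have hd : HasDerivAt f 0 s := hs.2 ▸ hs.1.hasDerivAt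
  simpa using hd.hasFDerivAt.hasFDerivWithinAt

/- Where `g` does not vanish, a double zero of `f - l * g` makes `l` a critical value of `f / g`,
so that one-dimensional Sard applies. -/
theorem ae_deriv_ne_mul_deriv {f g : ℝ → ℝ} (hf : Differentiable ℝ f) (hg : Differentiable ℝ g)
    (hg' : ∀ s, g s = 0 → deriv g s ≠ 0) :
    ∀ᵐ l : ℝ, ∀ s, f s = l * g s → deriv f s ≠ l * deriv g s := by
  set Z : Set ℝ := {s | g s = 0}
  have hZ : volume ((fun s ↦ deriv f s / deriv g s) '' Z) = 0 :=
    ((countable_zeros_of_deriv_ne_zero hg hg').image _).measure_zero _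
  filter_upwards [compl_mem_ae_iff.2 (measure_image_setOf_deriv_eq_zero (f / g)),
    compl_mem_ae_iff.2 hZ] with l hcrit hzero s hs hs'
  by_cases hgs : g s = 0
  · exact hzero ⟨s, hgs, by simp only [hs', mul_div_cancel_right₀ _ (hg' s hgs)]⟩
  · have hquot := (hf s).hasDerivAt.div (hg s).hasDerivAt hgs
    refine hcrit ⟨s, ⟨hquot.differentiableAt, ?_⟩, by simp [hs, hgs]⟩
    rw [hquot.deriv, hs, hs']
    ring

theorem ae_finite_setOf_deriv_add_mul_cos_eq_zero {x : ℝ → ℝ} (hx : ContDiff ℝ 2 x) (a b : ℝ) :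
    ∀ᵐ l : ℝ, {s ∈ Icc a b | deriv (fun s ↦ x s + l * Real.cos s) s = 0}.Finite := by
  have hx' : Differentiable ℝ (deriv x) := hx.deriv'.differentiable one_ne_zero
  have hsin (s : ℝ) (hs : Real.sin s = 0) : deriv Real.sin s ≠ 0 := by
    rw [Real.deriv_sin]
    intro hc
    simpa [hs, hc] using Real.sin_sq_add_cos_sq s
  filter_upwards [ae_deriv_ne_mul_deriv hx' Real.differentiable_sin hsin] with l hl
  have hderiv (s : ℝ) : deriv (fun s ↦ x s + l * Real.cos s) s = deriv x s - l * Real.sin s :=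
    (((hx.differentiable two_ne_zero) s).hasDerivAt.add
      ((Real.hasDerivAt_cos s).const_mul l)).deriv.trans (by ring)
  simp only [hderiv]
  refine finite_zeros_of_deriv_ne_zero isCompact_Icc
    (hx'.sub (Real.differentiable_sin.const_mul l)) fun s _ hs ↦ ?_
  have hderiv' := ((hx' s).hasDerivAt.fun_sub ((Real.hasDerivAt_sin s).const_mul l)).deriv
  rw [hderiv', ← Real.deriv_sin]
  exact sub_ne_zero.2 (hl s (sub_eq_zero.1 hs))

/-! ### Periodic functions -/

section Periodic

variable {E : Type*} [NormedAddCommGroup E] [NormedSpace ℝ E]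

theorem periodic_deriv {f : ℝ → E} {T : ℝ} (hf : Periodic f T) : Periodic (deriv f) T := fun s ↦ by
  rw [← deriv_comp_add_const, hf.funext]

theorem deriv_even_of_odd {f : ℝ → E} (hf : f.Odd) : (deriv f).Even := fun s ↦ by
  have h := deriv_comp_neg (f := f) (x := s)
  rw [funext hf, deriv.fun_neg] at h
  exact (neg_injective h).symm

theorem deriv_odd_of_even {f : ℝ → E} (hf : f.Even) : (deriv f).Odd := fun s ↦ by
  have h := deriv_comp_neg (f := f) (x := s)
  rw [funext hf] at h
  rw [h, neg_neg]

theorem exists_int_abs_sub_add_mul_two_pi_le_pi (s s' : ℝ) :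
    ∃ k : ℤ, |s - (s' + k * (2 * π))| ≤ π := by
  refine ⟨round ((s - s') / (2 * π)), ?_⟩
  have hrw : s - (s' + round ((s - s') / (2 * π)) * (2 * π)) =
      ((s - s') / (2 * π) - round ((s - s') / (2 * π))) * (2 * π) := by
    field_simp
    ring
  rw [hrw, abs_mul, abs_of_pos Real.two_pi_pos]
  nlinarith [Real.pi_pos, abs_sub_round ((s - s') / (2 * π))]

theorem exists_int_add_mul_two_pi_mem_Ico (s : ℝ) : ∃ k : ℤ, s + k * (2 * π) ∈ Ico 0 (2 * π) := by
  obtain ⟨k, hk, -⟩ := existsUnique_add_zsmul_mem_Ico Real.two_pi_pos s 0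
  exact ⟨k, by simpa using hk⟩

theorem periodic_integral {f : ℝ → E} {T : ℝ} (hf : Continuous f) (hper : Periodic f T)
    (hT : ∫ u in (0 : ℝ)..T, f u = 0) : Periodic (fun s ↦ ∫ u in (0 : ℝ)..s, f u) T := fun s ↦ by
  beta_reduce
  rw [← intervalIntegral.integral_add_adjacent_intervals (hf.intervalIntegrable 0 s)
    (hf.intervalIntegrable s (s + T)), hper.intervalIntegral_add_eq s 0, zero_add, hT, add_zero]

theorem odd_integral {f : ℝ → E} (hf : f.Even) : (fun s ↦ ∫ u in (0 : ℝ)..s, f u).Odd := fun s ↦ by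
  have h := intervalIntegral.integral_comp_neg (a := 0) (b := s) f
  simp only [hf _, neg_zero] at h
  beta_reduce
  rw [h, intervalIntegral.integral_symm]

theorem contDiff_integral [CompleteSpace E] {f : ℝ → E} (hf : ContDiff ℝ ∞ f) :
    ContDiff ℝ ∞ fun s ↦ ∫ u in (0 : ℝ)..s, f u := by
  have hderiv (s : ℝ) : HasDerivAt (fun s ↦ ∫ u in (0 : ℝ)..s, f u) (f s) s :=
    (hf.continuous.integral_hasStrictDerivAt 0 s).hasDerivAt
  refine contDiff_infty_iff_deriv.2 ⟨fun s ↦ (hderiv s).differentiableAt, ?_⟩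
  rwa [funext fun s ↦ (hderiv s).deriv]

end Periodic

/-! ### Flattening near finitely many points -/

/-- A smooth `2π`-periodic bump function: `1` at distance at most `r` from `2πℤ`, and `0` where
`1 - cos u ≥ r ^ 2`, hence outside the `πr`-neighbourhood of `2πℤ`. -/
def periodicBump (r u : ℝ) : ℝ :=
  Real.smoothTransition (2 - 2 * (1 - Real.cos u) / r ^ 2)

theorem contDiff_periodicBump (r : ℝ) : ContDiff ℝ ∞ (periodicBump r) :=
  Real.smoothTransition.contDiff.comp <| contDiff_const.sub <|
    (contDiff_const.mul (contDiff_const.sub Real.contDiff_cos)).div_const _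

theorem periodic_periodicBump (r : ℝ) : Periodic (periodicBump r) (2 * π) := fun u ↦ by
  simp only [periodicBump, Real.cos_add_two_pi]

theorem periodicBump_nonneg (r u : ℝ) : 0 ≤ periodicBump r u :=
  Real.smoothTransition.nonneg _

theorem periodicBump_of_abs_le {r u : ℝ} (hu : |u| ≤ r) : periodicBump r u = 1 := by
  refine Real.smoothTransition.one_of_one_le ?_
  have hcos : 2 * (1 - Real.cos u) ≤ r ^ 2 := by
    linarith [Real.one_sub_sq_div_two_le_cos (x := u), sq_le_sq.2 (hu.trans (le_abs_self r))]
  linarith [div_le_one_of_le₀ hcos (sq_nonneg r)]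

theorem periodicBump_eq_zero {r u : ℝ} (hr : 0 < r) (hu : r ^ 2 ≤ 1 - Real.cos u) :
    periodicBump r u = 0 := by
  refine Real.smoothTransition.zero_of_nonpos ?_
  rw [sub_nonpos, le_div_iff₀ (by positivity)]
  linarith

theorem abs_le_of_periodicBump_ne_zero {r u : ℝ} (hr : 0 < r) (hu : |u| ≤ π)
    (h : periodicBump r u ≠ 0) : |u| ≤ π * r := by
  contrapose! h
  refine periodicBump_eq_zero hr ?_
  have hsq : (π * r) ^ 2 ≤ u ^ 2 := sq_le_sq.2 (by rw [abs_of_pos (by positivity)]; exact h.le)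
  have hcos := Real.cos_le_one_sub_mul_cos_sq hu
  calc r ^ 2 ≤ 2 / π ^ 2 * (π * r) ^ 2 := by field_simp; linarith [sq_nonneg r]
    _ ≤ 2 / π ^ 2 * u ^ 2 := by gcongr
    _ ≤ 1 - Real.cos u := by linarith

theorem integral_periodicBump_sub_le {r : ℝ} (hr : 0 < r) (a : ℝ) :
    ∫ s in (0 : ℝ)..2 * π, periodicBump r (s - a) ≤ 2 * π * r := by
  have hshift : ∫ s in (0 : ℝ)..2 * π, periodicBump r (s - a) = ∫ u in -π..π, periodicBump r u := by
    rw [intervalIntegral.integral_comp_sub_right (periodicBump r) a, zero_sub,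
      show 2 * π - a = -a + 2 * π by ring,
      (periodic_periodicBump r).intervalIntegral_add_eq (-a) (-π), show -π + 2 * π = π by ring]
  set J : Set ℝ := Icc (-(π * r)) (π * r)
  have hJ : Integrable (J.indicator (1 : ℝ → ℝ)) :=
    (integrable_indicator_iff measurableSet_Icc).2 (integrableOn_const (by simp))
  have hJ0 (u : ℝ) : 0 ≤ J.indicator (1 : ℝ → ℝ) u := indicator_nonneg (fun _ _ ↦ zero_le_one) u
  rw [hshift, intervalIntegral.integral_of_le (by linarith [Real.pi_pos])]
  calc ∫ u in Ioc (-π) π, periodicBump r u ≤ ∫ u in Ioc (-π) π, J.indicator 1 u := by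
        refine setIntegral_mono_on ((contDiff_periodicBump r).continuous.integrableOn_Icc.mono_set
          Ioc_subset_Icc_self) hJ.integrableOn measurableSet_Ioc fun u hu ↦ ?_
        by_cases h : periodicBump r u = 0
        · exact h ▸ hJ0 u
        · have hmem : u ∈ J :=
            abs_le.1 (abs_le_of_periodicBump_ne_zero hr (abs_le.2 ⟨hu.1.le, hu.2⟩) h)
          rw [indicator_of_mem hmem]
          exact Real.smoothTransition.le_one _
    _ ≤ ∫ u, J.indicator 1 u := setIntegral_le_integral hJ (ae_of_all _ hJ0)
    _ = 2 * π * r := by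
        rw [integral_indicator_one measurableSet_Icc,
          Real.volume_real_Icc_of_le (by nlinarith [Real.pi_pos])]
        ring

section Flatten

variable {E : Type*} [NormedAddCommGroup E] [NormedSpace ℝ E] {q : ℝ → E}

/-- The modification of a `2π`-periodic `q` that is constant, equal to `q a`, at distance at most
`r` from each point `a` of `C`, provided that `r` is small compared with the distances between
the points of `C` modulo `2π`. -/
def flatten (q : ℝ → E) (C : Finset ℝ) (r s : ℝ) : E :=
  q s + ∑ a ∈ C, periodicBump r (s - a) • (q a - q s)

theorem contDiff_flatten (hq : ContDiff ℝ ∞ q) (C : Finset ℝ) (r : ℝ) :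
    ContDiff ℝ ∞ (flatten q C r) :=
  hq.add <| ContDiff.sum fun _ _ ↦
    ((contDiff_periodicBump r).comp (contDiff_id.sub contDiff_const)).smul (contDiff_const.sub hq)

theorem periodic_flatten (hq : Periodic q (2 * π)) (C : Finset ℝ) (r : ℝ) :
    Periodic (flatten q C r) (2 * π) := fun s ↦ by
  simp only [flatten, hq s, add_sub_right_comm, periodic_periodicBump r _]

theorem flatten_eq {C : Finset ℝ} {r a s : ℝ} (ha : a ∈ C) (hr : 0 < r)
    (hC : ∀ b ∈ C, b ≠ a → r + r ^ 2 ≤ 1 - Real.cos (a - b)) (hs : |s - a| ≤ r) :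
    flatten q C r s = q a := by
  have hfar (b : ℝ) (hb : b ∈ C) (hba : b ≠ a) : periodicBump r (s - b) • (q b - q s) = 0 := by
    have hcos := (abs_le.1 (Real.abs_cos_sub_cos_le (s - b) (a - b))).2
    rw [sub_sub_sub_cancel_right] at hcos
    rw [periodicBump_eq_zero hr (by linarith [hC b hb hba]), zero_smul]
  rw [flatten, Finset.sum_eq_single_of_mem a ha hfar, periodicBump_of_abs_le hs, one_smul,
    add_sub_cancel]

theorem integral_norm_flatten_sub_le (hq : ContDiff ℝ ∞ q) (hper : Periodic q (2 * π))
    {C : Finset ℝ} {r ε : ℝ} (hr : 0 < r)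
    (hC : ∀ a ∈ C, ∀ s, |s - a| ≤ π * r → ‖q a - q s‖ ≤ ε) :
    ∫ s in (0 : ℝ)..2 * π, ‖flatten q C r s - q s‖ ≤ C.card * (2 * π * r) * ε := by
  have hcont (a : ℝ) : Continuous fun s ↦ periodicBump r (s - a) * ε :=
    ((contDiff_periodicBump r).continuous.comp (continuous_sub_right a)).mul_const ε
  have hnear (a : ℝ) (ha : a ∈ C) (s : ℝ) :
      ‖periodicBump r (s - a) • (q a - q s)‖ ≤ periodicBump r (s - a) * ε := by
    rw [norm_smul, Real.norm_of_nonneg (periodicBump_nonneg _ _)]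
    by_cases h : periodicBump r (s - a) = 0
    · rw [h, zero_mul, zero_mul]
    obtain ⟨k, hk⟩ := exists_int_abs_sub_add_mul_two_pi_le_pi a s
    have hb : periodicBump r (s + k * (2 * π) - a) = periodicBump r (s - a) := by
      rw [add_sub_right_comm, (periodic_periodicBump r).int_mul k]
    have hqs := hC a ha (s + k * (2 * π))
      (abs_le_of_periodicBump_ne_zero hr (abs_sub_comm a _ ▸ hk) (hb ▸ h))
    rw [hper.int_mul k] at hqs
    exact mul_le_mul_of_nonneg_left hqs (periodicBump_nonneg _ _)
  have hε (a : ℝ) (ha : a ∈ C) : 0 ≤ ε :=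
    (norm_nonneg _).trans (hC a ha a (by rw [sub_self, abs_zero]; positivity))
  calc ∫ s in (0 : ℝ)..2 * π, ‖flatten q C r s - q s‖
      ≤ ∫ s in (0 : ℝ)..2 * π, ∑ a ∈ C, periodicBump r (s - a) * ε := by
        refine intervalIntegral.integral_mono_on Real.two_pi_pos.le
          (((contDiff_flatten hq C r).continuous.sub hq.continuous).norm.intervalIntegrable _ _)
          ((continuous_finsetSum C fun a _ ↦ hcont a).intervalIntegrable _ _) fun s _ ↦ ?_
        rw [flatten, add_sub_cancel_left]
        exact norm_sum_le_of_le C fun a ha ↦ hnear a ha s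
    _ = ∑ a ∈ C, (∫ s in (0 : ℝ)..2 * π, periodicBump r (s - a)) * ε := by
        rw [intervalIntegral.integral_finsetSum fun a _ ↦ (hcont a).intervalIntegrable _ _]
        simp only [intervalIntegral.integral_mul_const]
    _ ≤ ∑ _a ∈ C, 2 * π * r * ε := Finset.sum_le_sum fun a ha ↦
        mul_le_mul_of_nonneg_right (integral_periodicBump_sub_le hr a) (hε a ha)
    _ = C.card * (2 * π * r) * ε := by rw [Finset.sum_const, nsmul_eq_mul]; ring

theorem eventually_forall_abs_sub_le {P : ℝ → Prop} {a K : ℝ} (hP : ∀ᶠ s in 𝓝 a, P s) :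
    ∀ᶠ r in 𝓝[>] (0 : ℝ), ∀ s, |s - a| ≤ K * r → P s := by
  obtain ⟨d, hd, hP⟩ := Metric.eventually_nhds_iff.1 hP
  have hlim : Tendsto (fun r ↦ K * r) (𝓝[>] 0) (𝓝 0) := by
    simpa using (tendsto_id.const_mul K).mono_left (nhdsWithin_le_nhds (a := (0 : ℝ)))
  filter_upwards [hlim.eventually_lt_const hd] with r hr s hs
  exact hP (by simpa only [Real.dist_eq] using hs.trans_lt hr)

theorem eventually_flatten (hq : ContDiff ℝ ∞ q) (hper : Periodic q (2 * π)) {C : Finset ℝ}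
    (hC : ∀ a ∈ C, ∀ b ∈ C, b ≠ a → Real.cos (a - b) ≠ 1) {ε : ℝ} (hε : 0 < ε) :
    ∀ᶠ r in 𝓝[>] (0 : ℝ), (∀ a ∈ C, ∀ s, |s - a| ≤ r → flatten q C r s = q a) ∧
      ∫ s in (0 : ℝ)..2 * π, ‖flatten q C r s - q s‖ ≤ ε * r := by
  have hsep : ∀ᶠ r in 𝓝[>] (0 : ℝ), ∀ a ∈ C, ∀ b ∈ C, b ≠ a →
      r + r ^ 2 ≤ 1 - Real.cos (a - b) := by
    have hlim : Tendsto (fun r : ℝ ↦ r + r ^ 2) (𝓝[>] 0) (𝓝 0) :=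
      (by simpa using (by fun_prop : Continuous fun r : ℝ ↦ r + r ^ 2).tendsto 0 :
        Tendsto (fun r : ℝ ↦ r + r ^ 2) (𝓝 0) (𝓝 0)).mono_left nhdsWithin_le_nhds
    simp only [eventually_all_finset, eventually_imp_distrib_left]
    exact fun a ha b hb hba ↦ hlim.eventually_le_const
      (sub_pos.2 ((Real.cos_le_one _).lt_of_ne (hC a ha b hb hba)))
  set η : ℝ := ε / (C.card * (2 * π) + 1)
  have hη : 0 < η := by positivity
  have hclose : ∀ᶠ r in 𝓝[>] (0 : ℝ), ∀ a ∈ C, ∀ s, |s - a| ≤ π * r → ‖q a - q s‖ ≤ η := by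
    rw [eventually_all_finset]
    intro a _
    refine eventually_forall_abs_sub_le ?_
    filter_upwards [Metric.tendsto_nhds.1 (hq.continuous.tendsto a) η hη] with s hs
    exact (dist_eq_norm (q a) (q s) ▸ dist_comm (q s) (q a) ▸ hs.le)
  filter_upwards [self_mem_nhdsWithin, hsep, hclose] with r (hr : 0 < r) hsep hclose
  refine ⟨fun a ha s hs ↦ flatten_eq ha hr (hsep a ha) hs,
    (integral_norm_flatten_sub_le hq hper hr hclose).trans ?_⟩
  calc C.card * (2 * π * r) * η = ε * r * (C.card * (2 * π) / (C.card * (2 * π) + 1)) := by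
        simp only [η]; ring
    _ ≤ ε * r := mul_le_of_le_one_right (by positivity)
        (div_le_one_of_le₀ (by linarith) (by positivity))

theorem integral_comp_neg_of_periodic {f : ℝ → E} {T : ℝ} (hf : Periodic f T) :
    ∫ s in (0 : ℝ)..T, f (-s) = ∫ s in (0 : ℝ)..T, f s := by
  have h := hf.intervalIntegral_add_eq (-T) 0
  rwa [neg_add_cancel, zero_add, ← neg_zero, ← intervalIntegral.integral_comp_neg, neg_zero] at h

theorem integral_norm_average_neg_sub_le {f : ℝ → E} {T : ℝ} (hT : 0 ≤ T)
    (hf : Continuous f) (hq : Continuous q) (hfper : Periodic f T) (hqper : Periodic q T)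
    (heven : q.Even) :
    ∫ s in (0 : ℝ)..T, ‖(2⁻¹ : ℝ) • (f s + f (-s)) - q s‖ ≤ ∫ s in (0 : ℝ)..T, ‖f s - q s‖ := by
  set g : ℝ → ℝ := fun s ↦ ‖f s - q s‖
  have hg : Continuous g := (hf.sub hq).norm
  have hgper : Periodic g T := fun s ↦ by simp only [g, hfper s, hqper s]
  have hle (s : ℝ) : ‖(2⁻¹ : ℝ) • (f s + f (-s)) - q s‖ ≤ 2⁻¹ * (g s + g (-s)) := by
    have hrw : (2⁻¹ : ℝ) • (f s + f (-s)) - q s =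
        (2⁻¹ : ℝ) • ((f s - q s) + (f (-s) - q (-s))) := by
      rw [heven s]
      module
    rw [hrw, norm_smul, Real.norm_of_nonneg (by norm_num)]
    gcongr
    exact norm_add_le _ _
  calc ∫ s in (0 : ℝ)..T, ‖(2⁻¹ : ℝ) • (f s + f (-s)) - q s‖
      ≤ ∫ s in (0 : ℝ)..T, 2⁻¹ * (g s + g (-s)) :=
        intervalIntegral.integral_mono_on hT (Continuous.intervalIntegrable (by fun_prop) _ _)
          (Continuous.intervalIntegrable (by fun_prop) _ _) fun s _ ↦ hle s
    _ = ∫ s in (0 : ℝ)..T, g s := by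
        have hneg : IntervalIntegrable (fun s ↦ g (-s)) volume 0 T :=
          (hg.comp continuous_neg).intervalIntegrable _ _
        rw [intervalIntegral.integral_const_mul, intervalIntegral.integral_add
          (hg.intervalIntegrable _ _) hneg, integral_comp_neg_of_periodic hgper]
        ring

theorem eventually_exists_even_flattening (hq : ContDiff ℝ ∞ q) (hper : Periodic q (2 * π))
    (heven : q.Even) {Z : Set ℝ} (hZ : {s ∈ Icc 0 (2 * π) | s ∈ Z}.Finite)
    (hZper : ∀ s ∈ Z, ∀ k : ℤ, s + k * (2 * π) ∈ Z) (hZneg : ∀ s ∈ Z, -s ∈ Z)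
    {ε : ℝ} (hε : 0 < ε) :
    ∀ᶠ r in 𝓝[>] (0 : ℝ), ∃ u : ℝ → E, ContDiff ℝ ∞ u ∧ Periodic u (2 * π) ∧ u.Even ∧
      (∀ c ∈ Z, ∀ s, |s - c| ≤ r → u s = q c) ∧
      ∫ s in (0 : ℝ)..2 * π, ‖u s - q s‖ ≤ ε * r := by
  have hfin : {s ∈ Ico 0 (2 * π) | s ∈ Z}.Finite :=
    hZ.subset fun s hs ↦ ⟨Ico_subset_Icc_self hs.1, hs.2⟩
  set C : Finset ℝ := hfin.toFinset with hCdef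
  have hmem (a : ℝ) : a ∈ C ↔ a ∈ Ico 0 (2 * π) ∧ a ∈ Z := by simp [hCdef]
  have hC : ∀ a ∈ C, ∀ b ∈ C, b ≠ a → Real.cos (a - b) ≠ 1 := by
    intro a ha b hb hba hcos
    obtain ⟨⟨ha0, ha1⟩, -⟩ := (hmem a).1 ha
    obtain ⟨⟨hb0, hb1⟩, -⟩ := (hmem b).1 hb
    rw [Real.cos_eq_one_iff_of_lt_of_lt (by linarith) (by linarith)] at hcos
    exact hba (sub_eq_zero.1 hcos).symm
  filter_upwards [eventually_flatten hq hper hC hε] with r hr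
  set f := flatten q C r
  have hf : ContDiff ℝ ∞ f := contDiff_flatten hq C r
  have hfper : Periodic f (2 * π) := periodic_flatten hper C r
  have hfZ (c : ℝ) (hc : c ∈ Z) (s : ℝ) (hs : |s - c| ≤ r) : f s = q c := by
    obtain ⟨k, hk⟩ := exists_int_add_mul_two_pi_mem_Ico c
    have h := hr.1 _ ((hmem _).2 ⟨hk, hZper c hc k⟩) (s + k * (2 * π)) (by simpa using hs)
    rwa [hfper.int_mul k, hper.int_mul k] at h
  refine ⟨fun s ↦ (2⁻¹ : ℝ) • (f s + f (-s)), (hf.add (hf.comp contDiff_neg)).const_smul _,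
    fun s ↦ ?_, fun s ↦ by simp only [neg_neg, add_comm], fun c hc s hs ↦ ?_, ?_⟩
  · simp only [hfper s, neg_add, ← sub_eq_add_neg, hfper.sub_eq]
  · have hneg := hfZ (-c) (hZneg c hc) (-s) (by rwa [neg_sub_neg, abs_sub_comm])
    beta_reduce
    rw [hfZ c hc s hs, hneg, heven c, ← two_smul ℝ (q c), inv_smul_smul₀ two_ne_zero]
  · exact (integral_norm_average_neg_sub_le Real.two_pi_pos.le hf.continuous hq.continuous hfper
      hper heven).trans hr.2

end Flatten

theorem eventually_forall_abs_sub_le_of_periodic {Z : Set ℝ} {P : ℝ → ℝ → Prop}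
    (hZ : {s ∈ Icc 0 (2 * π) | s ∈ Z}.Finite) (hZper : ∀ s ∈ Z, ∀ k : ℤ, s + k * (2 * π) ∈ Z)
    (hPper : ∀ c s, ∀ k : ℤ, P (c + k * (2 * π)) (s + k * (2 * π)) → P c s)
    (hP : ∀ c ∈ Z, ∀ᶠ s in 𝓝 c, P c s) :
    ∀ᶠ r in 𝓝[>] (0 : ℝ), ∀ c ∈ Z, ∀ s, |s - c| ≤ r → P c s := by
  have h : ∀ᶠ r in 𝓝[>] (0 : ℝ), ∀ c ∈ {s ∈ Icc 0 (2 * π) | s ∈ Z}, ∀ s, |s - c| ≤ 1 * r →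
      P c s := by
    rw [eventually_all_finite hZ]
    exact fun c hc ↦ eventually_forall_abs_sub_le (hP c hc.2)
  filter_upwards [h] with r hr c hc s hs
  obtain ⟨k, hk⟩ := exists_int_add_mul_two_pi_mem_Ico c
  exact hPper c s k (hr _ ⟨Ico_subset_Icc_self hk, hZper c hc k⟩ _ (by simpa using hs))

theorem exists_even_cutoff {p : ℝ → ℝ} (hp : ContDiff ℝ ∞ p) (hper : Periodic p (2 * π))
    (hodd : p.Odd) (hp0 : ∃ s, p s ≠ 0) :
    ∃ δ > 0, ∃ κ : ℝ → ℝ, ContDiff ℝ ∞ κ ∧ Periodic κ (2 * π) ∧ κ.Even ∧ (∀ s, 0 ≤ κ s) ∧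
      ∫ s in (0 : ℝ)..2 * π, κ s = 1 ∧ ∀ s, |p s| ≤ δ → κ s = 0 := by
  obtain ⟨s₁, hs₁⟩ := hp0
  obtain ⟨k, hk⟩ := exists_int_add_mul_two_pi_mem_Ico s₁
  set s₀ := s₁ + k * (2 * π)
  have hs₀ : p s₀ ≠ 0 := by rwa [hper.int_mul k]
  set δ : ℝ := |p s₀| / 2
  have hδ : 0 < δ := half_pos (abs_pos.2 hs₀)
  set κ : ℝ → ℝ := fun s ↦ Real.smoothTransition (p s ^ 2 / δ ^ 2 - 1)
  have hκ : ContDiff ℝ ∞ κ :=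
    Real.smoothTransition.contDiff.comp (((hp.pow 2).div_const _).sub contDiff_const)
  have hκ0 (s : ℝ) : 0 ≤ κ s := Real.smoothTransition.nonneg _
  have hκs₀ : 0 < κ s₀ := by
    refine Real.smoothTransition.pos_of_pos ?_
    rw [sub_pos, one_lt_div (by positivity), sq_lt_sq, abs_of_pos hδ]
    exact half_lt_self (abs_pos.2 hs₀)
  have hJ : 0 < ∫ s in (0 : ℝ)..2 * π, κ s :=
    intervalIntegral.integral_pos Real.two_pi_pos hκ.continuous.continuousOn
      (fun s _ ↦ hκ0 s) ⟨s₀, Ico_subset_Icc_self hk, hκs₀⟩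
  refine ⟨δ, hδ, fun s ↦ κ s / ∫ s in (0 : ℝ)..2 * π, κ s, hκ.div_const _,
    fun s ↦ by simp only [κ, hper s], fun s ↦ by simp only [κ, hodd s, neg_sq],
    fun s ↦ div_nonneg (hκ0 s) hJ.le, ?_, fun s hs ↦ ?_⟩
  · rw [intervalIntegral.integral_div, div_self hJ.ne']
  · have hκs : κ s = 0 := by
      refine Real.smoothTransition.zero_of_nonpos ?_
      rw [sub_nonpos]
      exact div_le_one_of_le₀ (sq_le_sq.2 (by rwa [abs_of_pos hδ])) (sq_nonneg δ)
    beta_reduce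
    rw [hκs, zero_div]

/-! ### Projecting velocities onto a rotating line -/

/-- Twice the orthogonal projection of `p : ℂ` onto the real line spanned by `e^{-iθ}`. -/
def phaseProj (θ : ℝ) (p : ℂ) : ℂ :=
  p + conj p * Circle.exp (-2 * θ)

theorem circleExp_mul_phaseProj (θ : ℝ) (p : ℂ) :
    Circle.exp θ * phaseProj θ p = Circle.exp θ * p + conj (Circle.exp θ * p) := by
  have h : (Circle.exp θ : ℂ) * Circle.exp (-2 * θ) = conj (Circle.exp θ : ℂ) := by
    rw [← Circle.coe_inv_eq_conj, ← Circle.exp_neg, ← Circle.coe_mul, ← Circle.exp_add]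
    congr 2
    ring
  rw [phaseProj, map_mul (starRingEnd ℂ), ← h]
  ring

theorem im_circleExp_mul_phaseProj (θ : ℝ) (p : ℂ) : (Circle.exp θ * phaseProj θ p).im = 0 := by
  rw [circleExp_mul_phaseProj, Complex.add_conj, Complex.ofReal_im]

theorem inner_phaseProj (θ : ℝ) (p : ℂ) :
    ⟪p, phaseProj θ p⟫_ℝ = 2 * (Circle.exp θ * p).re ^ 2 := by
  have hunit : conj (Circle.exp θ : ℂ) * Circle.exp θ = 1 := by
    rw [mul_comm, Complex.mul_conj, Circle.normSq_coe, Complex.ofReal_one]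
  have hrot : ⟪p, phaseProj θ p⟫_ℝ = ⟪Circle.exp θ * p, Circle.exp θ * phaseProj θ p⟫_ℝ := by
    rw [Complex.inner, Complex.inner, map_mul]
    congr 1
    linear_combination (-conj p * phaseProj θ p) * hunit
  rw [hrot, circleExp_mul_phaseProj, Complex.inner]
  simp only [Complex.mul_re, Complex.add_re, Complex.add_im, Complex.conj_re, Complex.conj_im]
  ring

theorem contDiff_phaseProj {n : WithTop ℕ∞} {θ : ℝ → ℝ} {p : ℝ → ℂ} (hθ : ContDiff ℝ n θ)
    (hp : ContDiff ℝ n p) : ContDiff ℝ n fun s ↦ phaseProj (θ s) (p s) :=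
  hp.add <| (Complex.conjCLE.contDiff.comp hp).mul <|
    contDiff_coe_circleExp.comp (contDiff_const.mul hθ)

theorem exists_add_mul_conj_eq {a : ℂ} (ha : ‖a‖ ≤ 1 / 2) (b : ℂ) :
    ∃ μ : ℂ, μ + a * conj μ = b ∧ ‖μ‖ ≤ 2 * ‖b‖ := by
  have hden : (1 : ℂ) - a * conj a ≠ 0 := by
    rw [Complex.mul_conj, Complex.normSq_eq_norm_sq, sub_ne_zero]
    norm_cast
    nlinarith [norm_nonneg a]
  have hden' : (1 : ℂ) - conj a * a ≠ 0 := by rwa [mul_comm]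
  set μ : ℂ := (b - a * conj b) / (1 - a * conj a)
  have hμ : μ + a * conj μ = b := by
    simp only [μ, map_div₀, map_sub, map_mul, Complex.conj_conj, map_one]
    rw [mul_comm (conj a) a]
    field_simp
    ring
  refine ⟨μ, hμ, ?_⟩
  have hle : ‖μ‖ ≤ ‖b‖ + ‖a‖ * ‖μ‖ := by
    calc ‖μ‖ = ‖b - a * conj μ‖ := by rw [← hμ, add_sub_cancel_right]
      _ ≤ ‖b‖ + ‖a‖ * ‖μ‖ := by
        simpa only [norm_mul, Complex.norm_conj] using norm_sub_le b (a * conj μ)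
  nlinarith [norm_nonneg μ]

section ClosedLift

variable {x κ : ℝ → ℝ} {u : ℝ → ℂ} {a b : ℝ}

theorem integral_phaseProj_add_mul (hx : Continuous x) (hu : Continuous u) (hκ : Continuous κ)
    (N φ : ℝ) (μ : ℂ) (s : ℝ) :
    ∫ t in a..s, phaseProj (N * x t + φ) (u t + μ * κ t) =
      (∫ t in a..s, u t) + μ * ↑(∫ t in a..s, κ t) + Circle.exp (-2 * φ) *
        ((∫ t in a..s, conj (u t) * Circle.exp (N * (-2 * x t))) +
          conj μ * ∫ t in a..s, (κ t : ℂ) * Circle.exp (N * (-2 * x t))) := by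
  have hexp : Continuous fun t ↦ (Circle.exp (N * (-2 * x t)) : ℂ) :=
    continuous_coe_circleExp.comp (by fun_prop)
  have hsplit (t : ℝ) : (Circle.exp (-2 * (N * x t + φ)) : ℂ) =
      Circle.exp (-2 * φ) * Circle.exp (N * (-2 * x t)) := by
    rw [← Circle.coe_mul, ← Circle.exp_add]
    congr 2
    ring
  rw [← intervalIntegral.integral_ofReal, mul_add, ← intervalIntegral.integral_const_mul,
    ← intervalIntegral.integral_const_mul, ← intervalIntegral.integral_const_mul,
    ← intervalIntegral.integral_const_mul, ← intervalIntegral.integral_add,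
    ← intervalIntegral.integral_add, ← intervalIntegral.integral_add]
  · refine intervalIntegral.integral_congr fun t _ ↦ ?_
    simp only [phaseProj, hsplit, map_add, map_mul, Complex.conj_ofReal]
    ring
  all_goals
    apply Continuous.intervalIntegrable
    fun_prop

/- Correcting `u` by a multiple `μ * κ` closes up the primitive of its projection: when the two
oscillatory integrals are small, the equation for `μ` is a perturbation of `μ = -∫ u`. -/
theorem exists_integral_phaseProj_eq_zero_of_norm_le (hab : a ≤ b) (hx : Continuous x)
    (hu : Continuous u) (hκ : Continuous κ) (hκ0 : ∀ s, 0 ≤ κ s) (hκ1 : ∫ s in a..b, κ s = 1)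
    {N η : ℝ} (hη : η ≤ 1 / 2)
    (hNu : ∀ s ∈ Icc a b, ‖∫ t in a..s, conj (u t) * Circle.exp (N * (-2 * x t))‖ ≤ η)
    (hNκ : ∀ s ∈ Icc a b, ‖∫ t in a..s, (κ t : ℂ) * Circle.exp (N * (-2 * x t))‖ ≤ η) (φ : ℝ) :
    ∃ μ : ℂ, ∫ t in a..b, phaseProj (N * x t + φ) (u t + μ * κ t) = 0 ∧
      ∀ s ∈ Icc a b, ‖(∫ t in a..s, phaseProj (N * x t + φ) (u t + μ * κ t)) -
        ∫ t in a..s, u t‖ ≤ 3 * ‖∫ t in a..b, u t‖ + 4 * η := by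
  simp only [integral_phaseProj_add_mul hx hu hκ]
  set A : ℝ → ℂ := fun s ↦ ∫ t in a..s, conj (u t) * Circle.exp (N * (-2 * x t))
  set B : ℝ → ℂ := fun s ↦ ∫ t in a..s, (κ t : ℂ) * Circle.exp (N * (-2 * x t))
  set U := ∫ t in a..b, u t
  set e := ((Circle.exp (-2 * φ) : Circle) : ℂ)
  have he : ‖e‖ = 1 := Circle.norm_coe _
  have hb : b ∈ Icc a b := ⟨hab, le_rfl⟩
  obtain ⟨μ, hμ, hμle⟩ := exists_add_mul_conj_eq (a := e * B b)
    (by rw [norm_mul, he, one_mul]; exact (hNκ b hb).trans hη) (-(U + e * A b))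
  have hμU : ‖μ‖ ≤ 2 * (‖U‖ + 1 * η) := by
    rw [norm_neg] at hμle
    refine hμle.trans ?_
    gcongr
    exact norm_add_le_of_le le_rfl (norm_mul_le_of_le he.le (hNu b hb))
  refine ⟨μ, ?_, fun s hs ↦ ?_⟩
  · rw [hκ1, Complex.ofReal_one]
    linear_combination hμ
  · have hK : ‖((∫ t in a..s, κ t : ℝ) : ℂ)‖ ≤ 1 := by
      rw [Complex.norm_real, ← hκ1]
      exact norm_integral_le_integral_of_norm_le
        (fun t _ ↦ (Real.norm_of_nonneg (hκ0 t)).le) (hκ.intervalIntegrable _ _) hs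
    rw [add_assoc, add_sub_cancel_left]
    calc _ ≤ ‖μ‖ * 1 + 1 * (η + ‖μ‖ * η) := norm_add_le_of_le (norm_mul_le_of_le le_rfl hK)
          (norm_mul_le_of_le he.le (norm_add_le_of_le (hNu s hs)
            (norm_mul_le_of_le (Complex.norm_conj μ).le (hNκ s hs))))
      _ ≤ 3 * ‖U‖ + 4 * η := by nlinarith [norm_nonneg μ]

theorem eventually_exists_integral_phaseProj_eq_zero (hab : a ≤ b) (hx : ContDiff ℝ 2 x)
    (hx0 : ∀ᵐ t, t ∈ Ι a b → deriv x t ≠ 0) (hu : ContDiff ℝ 1 u) (hκ : ContDiff ℝ 1 κ)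
    (hκ0 : ∀ s, 0 ≤ κ s) (hκ1 : ∫ s in a..b, κ s = 1) {ε : ℝ} (hε : 0 < ε) :
    ∀ᶠ N in atTop, ∀ φ, ∃ μ : ℂ, ∫ t in a..b, phaseProj (N * x t + φ) (u t + μ * κ t) = 0 ∧
      ∀ s ∈ Icc a b, ‖(∫ t in a..s, phaseProj (N * x t + φ) (u t + μ * κ t)) -
        ∫ t in a..s, u t‖ ≤ 3 * ‖∫ t in a..b, u t‖ + ε := by
  have hx2 : ContDiff ℝ 2 fun t ↦ -2 * x t := contDiff_const.mul hx
  have hx20 : ∀ᵐ t, t ∈ Ι a b → deriv (fun t ↦ -2 * x t) t ≠ 0 := by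
    filter_upwards [hx0] with t ht hmem
    rw [deriv_const_mul _ (hx.differentiable two_ne_zero t)]
    exact mul_ne_zero (by norm_num) (ht hmem)
  have hη : 0 < min (1 / 2) (ε / 4) := by positivity
  filter_upwards [Metric.tendstoUniformlyOn_iff.1 (tendstoUniformlyOn_integral_mul_circleExp
      (Complex.conjCLE.contDiff.comp hu) hx2 hx20) _ hη,
    Metric.tendstoUniformlyOn_iff.1 (tendstoUniformlyOn_integral_mul_circleExp
      (Complex.ofRealCLM.contDiff.comp hκ) hx2 hx20) _ hη] with N hNu hNκ φ
  simp only [Pi.zero_apply, dist_zero_left, comp_apply, Complex.conjCLE_apply,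
    Complex.ofRealCLM_apply] at hNu hNκ
  obtain ⟨μ, hμ, hμε⟩ := exists_integral_phaseProj_eq_zero_of_norm_le hab hx.continuous
    hu.continuous hκ.continuous hκ0 hκ1 (min_le_left _ _) (fun s hs ↦ (hNu s hs).le)
    (fun s hs ↦ (hNκ s hs).le) φ
  exact ⟨μ, hμ, fun s hs ↦ (hμε s hs).trans (by linarith [min_le_right (1 / 2 : ℝ) (ε / 4)])⟩

end ClosedLift

theorem norm_integral_sub_le {u w : ℝ → ℂ} (hu : Continuous u) (hw : ContDiff ℝ 1 w)
    {a b s : ℝ} (hs : s ∈ Icc a b) :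
    ‖(∫ t in a..s, u t) - (w s - w a)‖ ≤ ∫ t in a..b, ‖u t - deriv w t‖ := by
  have hdw : Continuous (deriv w) := hw.continuous_deriv_one
  have hrw : (∫ t in a..s, u t) - (w s - w a) = ∫ t in a..s, (u t - deriv w t) := by
    rw [intervalIntegral.integral_sub (hu.intervalIntegrable _ _) (hdw.intervalIntegrable _ _),
      intervalIntegral.integral_deriv_eq_sub (fun t _ ↦ hw.differentiable one_ne_zero t)
        (hdw.intervalIntegrable _ _)]
  rw [hrw]
  exact norm_integral_le_integral_of_norm_le (fun _ _ ↦ le_rfl)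
    ((hu.sub hdw).norm.intervalIntegrable _ _) hs

section Approximation

variable {x : ℝ → ℝ} {w : ℝ → ℂ}

theorem eventually_exists_primitive_phaseProj (hx : ContDiff ℝ ∞ x) (hxper : Periodic x (2 * π))
    (hxeven : x.Even) (hw : ContDiff ℝ ∞ w) (hwper : Periodic w (2 * π)) (hwodd : w.Odd)
    (hx0 : ∀ᵐ t, t ∈ Ι 0 (2 * π) → deriv x t ≠ 0) {u : ℝ → ℂ} (hu : ContDiff ℝ ∞ u)
    (huper : Periodic u (2 * π)) (hueven : u.Even) {κ : ℝ → ℝ} (hκ : ContDiff ℝ ∞ κ)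
    (hκper : Periodic κ (2 * π)) (hκeven : κ.Even) (hκ0 : ∀ s, 0 ≤ κ s)
    (hκ1 : ∫ s in (0 : ℝ)..2 * π, κ s = 1) {ε : ℝ} (hε : 0 < ε) :
    ∀ᶠ N in atTop, ∀ φ, ∃ w₁ : ℝ → ℂ, ContDiff ℝ ∞ w₁ ∧ Periodic w₁ (2 * π) ∧ w₁.Odd ∧
      (∀ s, ‖w₁ s - w s‖ ≤ 4 * (∫ s in (0 : ℝ)..2 * π, ‖u s - deriv w s‖) + ε) ∧
      ∃ μ : ℂ, ∀ s, deriv w₁ s = phaseProj (N * x s + φ) (u s + μ * κ s) := by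
  filter_upwards [eventually_exists_integral_phaseProj_eq_zero Real.two_pi_pos.le
    (hx.of_le (WithTop.coe_le_coe.2 le_top)) hx0 (hu.of_le (by simp)) (hκ.of_le (by simp)) hκ0
    hκ1 hε] with N hN φ
  obtain ⟨μ, hclosed, hclose⟩ := hN φ
  set v : ℝ → ℂ := fun t ↦ phaseProj (N * x t + φ) (u t + μ * κ t)
  have hv : ContDiff ℝ ∞ v := contDiff_phaseProj ((contDiff_const.mul hx).add contDiff_const)
    (hu.add (contDiff_const.mul (Complex.ofRealCLM.contDiff.comp hκ)))
  have hper : Periodic (fun s ↦ ∫ t in (0 : ℝ)..s, v t) (2 * π) :=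
    periodic_integral hv.continuous (fun s ↦ by simp only [v, hxper s, huper s, hκper s]) hclosed
  refine ⟨fun s ↦ ∫ t in (0 : ℝ)..s, v t, contDiff_integral hv, hper,
    odd_integral fun s ↦ by simp only [v, hxeven s, hueven s, hκeven s], fun s ↦ ?_,
    μ, fun s ↦ (hv.continuous.integral_hasStrictDerivAt 0 s).hasDerivAt.deriv⟩
  obtain ⟨k, hk⟩ := exists_int_add_mul_two_pi_mem_Ico s
  rw [← hper.int_mul k s, ← hwper.int_mul k s]
  have hw0 : w 0 = 0 := hwodd.map_zero
  have hw2π : w (2 * π) = 0 := by rw [← zero_add (2 * π), hwper, hw0]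
  have hvu := hclose _ (Ico_subset_Icc_self hk)
  have huw := norm_integral_sub_le hu.continuous (hw.of_le (by simp)) (Ico_subset_Icc_self hk)
  have huU := norm_integral_sub_le hu.continuous (hw.of_le (by simp))
    (right_mem_Icc.2 Real.two_pi_pos.le)
  rw [hw0, sub_zero] at huw
  rw [hw0, hw2π, sub_zero, sub_zero] at huU
  refine (norm_sub_le_norm_sub_add_norm_sub _ _ _).trans ((add_le_add hvu huw).trans ?_)
  linarith

/- Near the critical points of `x` the phase is slow; there the velocity is first made constant,
and the cut-off of the correction vanishes. -/
theorem eventually_exists_phaseProj_approximation (hx : ContDiff ℝ ∞ x)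
    (hxper : Periodic x (2 * π)) (hxeven : x.Even) (hw : ContDiff ℝ ∞ w)
    (hwper : Periodic w (2 * π)) (hwodd : w.Odd)
    (hZ : {s ∈ Icc 0 (2 * π) | deriv x s = 0}.Finite) {m : ℝ} (hm : 0 < m) :
    ∀ᶠ r in 𝓝[>] (0 : ℝ), ∀ᶠ N in atTop, ∀ φ, ∃ w₁ : ℝ → ℂ, ContDiff ℝ ∞ w₁ ∧
      Periodic w₁ (2 * π) ∧ w₁.Odd ∧ (∀ s, ‖w₁ s - w s‖ ≤ m * r) ∧
      (∀ s, (Circle.exp (N * x s + φ) * deriv w₁ s).im = 0) ∧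
      ∀ c, deriv x c = 0 → ∀ s, |s - c| ≤ r →
        deriv w₁ s = phaseProj (N * x s + φ) (deriv w c) := by
  have hdx : ContDiff ℝ ∞ (deriv x) := hx.deriv'
  have hdxper := periodic_deriv hxper
  have hdxodd := deriv_odd_of_even hxeven
  have hZper : ∀ s ∈ {s | deriv x s = 0}, ∀ k : ℤ, s + k * (2 * π) ∈ {s | deriv x s = 0} :=
    fun s hs k ↦ (hdxper.int_mul k s).trans hs
  have hZneg : ∀ s ∈ {s | deriv x s = 0}, -s ∈ {s | deriv x s = 0} := fun s hs ↦ by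
    rw [mem_ofPred_eq, hdxodd, hs, neg_zero]
  obtain ⟨s₀, hs₀, hs₀Z⟩ := (Icc_infinite Real.two_pi_pos).exists_notMem_finite hZ
  obtain ⟨δ, hδ, κ, hκ, hκper, hκeven, hκ0, hκ1, hκδ⟩ :=
    exists_even_cutoff hdx hdxper hdxodd ⟨s₀, fun h ↦ hs₀Z ⟨hs₀, h⟩⟩
  have hx0 : ∀ᵐ t, t ∈ Ι (0 : ℝ) (2 * π) → deriv x t ≠ 0 := by
    filter_upwards [hZ.countable.ae_notMem volume] with t ht hmem h
    rw [uIoc_of_le Real.two_pi_pos.le] at hmem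
    exact ht ⟨Ioc_subset_Icc_self hmem, h⟩
  have hxδ := eventually_forall_abs_sub_le_of_periodic (P := fun _ s ↦ |deriv x s| ≤ δ) hZ hZper
    (fun _ s k h ↦ by rwa [hdxper.int_mul k s] at h)
    fun c hc ↦ (hdx.continuous.abs.tendsto c).eventually_le_const (by rwa [hc, abs_zero])
  filter_upwards [self_mem_nhdsWithin, hxδ, eventually_exists_even_flattening hw.deriv'
    (periodic_deriv hwper) (deriv_even_of_odd hwodd) hZ hZper hZneg (ε := m / 8) (by positivity)]
    with r (hr : 0 < r) hxδ ⟨u, hu, huper, hueven, huZ, huint⟩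
  filter_upwards [eventually_exists_primitive_phaseProj hx hxper hxeven hw hwper hwodd hx0 hu huper
    hueven hκ hκper hκeven hκ0 hκ1 (ε := m * r / 2) (by positivity)] with N hN φ
  obtain ⟨w₁, hw₁, hw₁per, hw₁odd, hclose, μ, hdw₁⟩ := hN φ
  refine ⟨w₁, hw₁, hw₁per, hw₁odd, fun s ↦ (hclose s).trans (by linarith),
    fun s ↦ by rw [hdw₁]; exact im_circleExp_mul_phaseProj _ _, fun c hc s hs ↦ ?_⟩
  rw [hdw₁, hκδ s (hxδ c hc s hs), huZ c hc s hs, Complex.ofReal_zero, mul_zero, add_zero]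

end Approximation

/-! ### Periodic embeddings -/

section PeriodicEmbedding

variable {ι E F : Type*} [NormedAddCommGroup E] [NormedAddCommGroup F] {γ η : ι → ℝ → E} {m : ℝ}

/-- A quantitative form of injectivity and immersivity of a family of `2π`-periodic curves, stable
under `C¹`-small perturbations. -/
def IsUniformlyEmbedded (γ : ι → ℝ → E) (m : ℝ) : Prop :=
  (∀ i s s', |s - s'| ≤ π → m * |s - s'| ≤ ‖γ i s - γ i s'‖) ∧
    ∀ i k, i ≠ k → ∀ s s', m ≤ ‖γ i s - γ k s'‖

theorem IsUniformlyEmbedded.add {l : ℝ} (h : IsUniformlyEmbedded γ m)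
    (hlip : ∀ i s s', ‖η i s - η i s'‖ ≤ l * |s - s'|) (hη : ∀ i s, ‖η i s‖ ≤ l) :
    IsUniformlyEmbedded (fun i s ↦ γ i s + η i s) (m - 2 * l) := by
  have htri (i k : ι) (s s' : ℝ) :
      ‖γ i s - γ k s'‖ ≤ ‖γ i s + η i s - (γ k s' + η k s')‖ + ‖η i s - η k s'‖ := by
    have hrw : γ i s - γ k s' = γ i s + η i s - (γ k s' + η k s') - (η i s - η k s') := by abel
    rw [hrw]
    exact norm_sub_le _ _
  refine ⟨fun i s s' hs ↦ ?_, fun i k hik s s' ↦ ?_⟩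
  · have hl : 0 ≤ l * |s - s'| := (norm_nonneg _).trans (hlip i s s')
    linarith [h.1 i s s' hs, htri i i s s', hlip i s s']
  · linarith [h.2 i k hik s s', htri i k s s', norm_sub_le (η i s) (η k s'), hη i s, hη k s']

variable [NormedSpace ℝ E] [NormedSpace ℝ F]

/-- A smooth embedding of `ι × ℝ/2πℤ`, encoded by its `2π`-periodic components. -/
structure IsPeriodicEmbedding (γ : ι → ℝ → E) : Prop where
  contDiff (i : ι) : ContDiff ℝ ∞ (γ i)
  periodic (i : ι) : Periodic (γ i) (2 * π)
  eq_and_exists_of_eq {i k : ι} {s s' : ℝ} :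
    γ i s = γ k s' → i = k ∧ ∃ j : ℤ, s = s' + j * (2 * π)
  deriv_ne_zero (i : ι) (s : ℝ) : deriv (γ i) s ≠ 0

theorem IsPeriodicEmbedding.comp (h : IsPeriodicEmbedding γ) {Φ : E → F} {Ψ : F → E}
    (hΦ : ContDiff ℝ ∞ Φ) (hΨ : Differentiable ℝ Ψ) (hinv : LeftInverse Ψ Φ) :
    IsPeriodicEmbedding fun i s ↦ Φ (γ i s) where
  contDiff i := hΦ.comp (h.contDiff i)
  periodic i := (h.periodic i).comp Φ
  eq_and_exists_of_eq heq := h.eq_and_exists_of_eq (hinv.injective heq)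
  deriv_ne_zero i s h0 := by
    have hd : HasDerivAt (fun s ↦ Φ (γ i s)) 0 s := h0 ▸
      ((hΦ.comp (h.contDiff i)).differentiable (by simp) s).hasDerivAt
    have hdγ := (hΨ (Φ (γ i s))).hasFDerivAt.comp_hasDerivAt s hd
    simp only [comp_def, hinv _, map_zero] at hdγ
    exact h.deriv_ne_zero i s hdγ.deriv

theorem IsPeriodicEmbedding.ne_of_abs_sub_le (h : IsPeriodicEmbedding γ) (i : ι) {s s' : ℝ}
    (hs : |s - s'| ≤ π) (hne : s ≠ s') : γ i s ≠ γ i s' := by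
  intro heq
  obtain ⟨-, j, hj⟩ := h.eq_and_exists_of_eq heq
  rw [hj, add_sub_cancel_left, abs_mul, abs_of_pos Real.two_pi_pos] at hs
  have hj1 : |(j : ℝ)| < 1 := by nlinarith [Real.pi_pos]
  have hj0 : j = 0 := Int.abs_lt_one_iff.1 (mod_cast hj1)
  rw [hj0, Int.cast_zero, zero_mul, add_zero] at hj
  exact hne hj

theorem IsPeriodicEmbedding.infinite_range (h : IsPeriodicEmbedding γ) (i : ι) :
    (range (γ i)).Infinite := by
  refine infinite_of_injOn_mapsTo (fun s hs s' hs' heq ↦ ?_) (fun s _ ↦ mem_range_self s)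
    (Icc_infinite Real.pi_pos)
  by_contra hne
  exact h.ne_of_abs_sub_le i ((abs_sub_le_of_le_of_le hs.1 hs.2 hs'.1 hs'.2).trans_eq (sub_zero π))
    hne heq

theorem IsUniformlyEmbedded.isPeriodicEmbedding (h : IsUniformlyEmbedded γ m) (hm : 0 < m)
    (hγ : ∀ i, ContDiff ℝ ∞ (γ i)) (hper : ∀ i, Periodic (γ i) (2 * π)) :
    IsPeriodicEmbedding γ where
  contDiff := hγ
  periodic := hper
  eq_and_exists_of_eq {i k s s'} heq := by
    obtain rfl : i = k := by
      by_contra hik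
      have hle := h.2 i k hik s s'
      rw [heq, sub_self, norm_zero] at hle
      exact hm.not_ge hle
    obtain ⟨j, hj⟩ := exists_int_abs_sub_add_mul_two_pi_le_pi s s'
    have hle := h.1 i _ _ hj
    rw [(hper i).int_mul j, heq, sub_self, norm_zero] at hle
    exact ⟨rfl, j, sub_eq_zero.1 (abs_nonpos_iff.1 (nonpos_of_mul_nonpos_right hle hm))⟩
  deriv_ne_zero i s h0 := by
    have hd : HasDerivAt (γ i) 0 s := h0 ▸ ((hγ i).differentiable (by simp) s).hasDerivAt
    have hsmall := (hasDerivAt_iff_isLittleO.1 hd).def (half_pos hm)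
    have hnear : ∀ᶠ u in 𝓝 s, |u - s| < π :=
      (by fun_prop : Continuous fun u ↦ |u - s|).tendsto s |>.eventually_lt_const
        (by simpa using Real.pi_pos)
    obtain ⟨u, ⟨hu, huπ⟩, hne⟩ :=
      ((hsmall.and hnear).filter_mono nhdsWithin_le_nhds |>.and self_mem_nhdsWithin).exists
        (f := 𝓝[≠] s)
    rw [smul_zero, sub_zero, Real.norm_eq_abs] at hu
    have hpos : 0 < |u - s| := abs_pos.2 (sub_ne_zero.2 hne)
    nlinarith [h.1 i u s huπ.le]

theorem exists_pos_eventually_mul_abs_sub_le {g : ℝ → E} (hg : ContDiff ℝ 1 g) {a b : ℝ}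
    (hab : a ≠ b → g a ≠ g b) (ha : deriv g a ≠ 0) :
    ∃ m > 0, ∀ᶠ q : ℝ × ℝ in 𝓝 (a, b), m * |q.1 - q.2| ≤ ‖g q.1 - g q.2‖ := by
  rcases eq_or_ne a b with rfl | hne
  · have hpos : 0 < ‖deriv g a‖ := norm_pos_iff.2 ha
    have hd : HasStrictDerivAt g (deriv g a) a := hg.contDiffAt.hasStrictDerivAt one_ne_zero
    refine ⟨‖deriv g a‖ / 2, half_pos hpos, ?_⟩
    filter_upwards [hd.hasStrictFDerivAt.isLittleO.def (half_pos hpos)] with q hq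
    simp only [ContinuousLinearMap.toSpanSingleton_apply] at hq
    have htri := norm_sub_norm_le ((q.1 - q.2) • deriv g a) (g q.1 - g q.2)
    rw [norm_sub_rev (_ • _), norm_smul, Real.norm_eq_abs] at htri
    rw [Real.norm_eq_abs] at hq
    linarith
  · have hpos : 0 < ‖g a - g b‖ := norm_pos_iff.2 (sub_ne_zero.2 (hab hne))
    have habs : 0 < |a - b| := abs_pos.2 (sub_ne_zero.2 hne)
    have hgc := hg.continuous
    refine ⟨‖g a - g b‖ / (2 * |a - b|), by positivity, ?_⟩
    refine (ContinuousAt.eventually_lt (f := fun q : ℝ × ℝ ↦ _ * |q.1 - q.2|)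
      (g := fun q : ℝ × ℝ ↦ ‖g q.1 - g q.2‖) (by fun_prop) (by fun_prop) ?_).mono
      fun _ ↦ le_of_lt
    field_simp
    norm_num

theorem IsPeriodicEmbedding.eventually_mul_abs_sub_le (h : IsPeriodicEmbedding γ) (i : ι) :
    ∀ᶠ m in 𝓝 (0 : ℝ), ∀ s s', |s - s'| ≤ π → m * |s - s'| ≤ ‖γ i s - γ i s'‖ := by
  set K : Set (ℝ × ℝ) := Icc 0 (2 * π) ×ˢ Icc (-π) (3 * π) ∩ {p | |p.1 - p.2| ≤ π}
  have hK : IsCompact K :=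
    (isCompact_Icc.prod isCompact_Icc).inter_right (isClosed_le (by fun_prop) (by fun_prop))
  have hlocal : ∀ q ∈ K, ∀ᶠ z : ℝ × ℝ × ℝ in 𝓝 (0, q),
      z.1 * |z.2.1 - z.2.2| ≤ ‖γ i z.2.1 - γ i z.2.2‖ := by
    rintro ⟨a, b⟩ ⟨-, hab⟩
    obtain ⟨m, hm, hmq⟩ := exists_pos_eventually_mul_abs_sub_le ((h.contDiff i).of_le (by simp))
      (h.ne_of_abs_sub_le i hab) (h.deriv_ne_zero i a)
    rw [nhds_prod_eq]
    filter_upwards [(eventually_lt_nhds hm).prod_mk hmq] with z hz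
    exact (mul_le_mul_of_nonneg_right hz.1.le (abs_nonneg _)).trans hz.2
  filter_upwards [hK.eventually_forall_of_forall_eventually
    (P := fun m q ↦ m * |q.1 - q.2| ≤ ‖γ i q.1 - γ i q.2‖) hlocal] with m hm s s' hs
  obtain ⟨k, hk⟩ := exists_int_add_mul_two_pi_mem_Ico s
  have hs' := abs_le.1 hs
  have hmem : (s + k * (2 * π), s' + k * (2 * π)) ∈ K :=
    ⟨⟨Ico_subset_Icc_self hk, ⟨by linarith [hk.1], by linarith [hk.2]⟩⟩, by simpa using hs⟩
  simpa only [add_sub_add_right_eq_sub, (h.periodic i).int_mul k _] using hm _ hmem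

theorem IsPeriodicEmbedding.eventually_le_norm_sub (h : IsPeriodicEmbedding γ) {i k : ι}
    (hik : i ≠ k) : ∀ᶠ m in 𝓝 (0 : ℝ), ∀ s s', m ≤ ‖γ i s - γ k s'‖ := by
  have hγi := (h.contDiff i).continuous
  have hγk := (h.contDiff k).continuous
  have hK : IsCompact (Icc 0 (2 * π) ×ˢ Icc 0 (2 * π)) := isCompact_Icc.prod isCompact_Icc
  have hlocal : ∀ q ∈ Icc 0 (2 * π) ×ˢ Icc 0 (2 * π), ∀ᶠ z : ℝ × ℝ × ℝ in 𝓝 (0, q),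
      z.1 < ‖γ i z.2.1 - γ k z.2.2‖ := fun q _ ↦
    ContinuousAt.eventually_lt (by fun_prop) (by fun_prop)
      (norm_pos_iff.2 (sub_ne_zero.2 fun heq ↦ hik (h.eq_and_exists_of_eq heq).1))
  filter_upwards [hK.eventually_forall_of_forall_eventually
    (P := fun m q ↦ m < ‖γ i q.1 - γ k q.2‖) hlocal] with m hm s s'
  obtain ⟨a, ha⟩ := exists_int_add_mul_two_pi_mem_Ico s
  obtain ⟨b, hb⟩ := exists_int_add_mul_two_pi_mem_Ico s'
  simpa only [(h.periodic i).int_mul a _, (h.periodic k).int_mul b _] using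
    (hm (s + a * (2 * π), s' + b * (2 * π)) ⟨Ico_subset_Icc_self ha, Ico_subset_Icc_self hb⟩).le

theorem IsPeriodicEmbedding.exists_isUniformlyEmbedded [Finite ι] (h : IsPeriodicEmbedding γ) :
    ∃ m > 0, IsUniformlyEmbedded γ m := by
  have hall : ∀ᶠ m in 𝓝 (0 : ℝ), IsUniformlyEmbedded γ m := by
    refine (eventually_all.2 h.eventually_mul_abs_sub_le).and ?_
    simp only [eventually_all]
    exact fun i k hik ↦ h.eventually_le_norm_sub hik
  obtain ⟨m, hγ, hm⟩ := ((hall.filter_mono nhdsWithin_le_nhds).and self_mem_nhdsWithin).exists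
    (f := 𝓝[>] 0)
  exact ⟨m, hm, hγ⟩

end PeriodicEmbedding

/-! ### Interpolating between curves over a common height function -/

section Advances

variable {ι E : Type*} [NormedAddCommGroup E] [InnerProductSpace ℝ E]

/-- At every critical point `c` of `x` the curve `w` moves in the direction `q c`, and it does not
move backwards at distance at most `r` from `c`. For fixed `x`, `q` and `r` this is a convex
condition on `w`; it makes `(x, w)` an immersion that is injective on intervals of length `r`. -/
def AdvancesAtCritical (x : ℝ → ℝ) (q : ℝ → E) (r : ℝ) (w : ℝ → E) : Prop :=
  ∀ c, deriv x c = 0 →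
    0 < ⟪q c, deriv w c⟫_ℝ ∧ ∀ s, |s - c| ≤ r → 0 ≤ ⟪q c, deriv w s⟫_ℝ

variable {x : ℝ → ℝ} {q w w₀ w₁ : ℝ → E} {r m : ℝ}

theorem AdvancesAtCritical.convexCombination (h₀ : AdvancesAtCritical x q r w₀)
    (h₁ : AdvancesAtCritical x q r w₁) (hw₀ : Differentiable ℝ w₀) (hw₁ : Differentiable ℝ w₁)
    {β : ℝ} (hβ : β ∈ Icc (0 : ℝ) 1) :
    AdvancesAtCritical x q r fun s ↦ (1 - β) • w₀ s + β • w₁ s := by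
  intro c hc
  have hinner (s : ℝ) : ⟪q c, deriv (fun s ↦ (1 - β) • w₀ s + β • w₁ s) s⟫_ℝ =
      (1 - β) • ⟪q c, deriv w₀ s⟫_ℝ + β • ⟪q c, deriv w₁ s⟫_ℝ := by
    rw [(((hw₀ s).hasDerivAt.fun_const_smul (1 - β)).fun_add
      ((hw₁ s).hasDerivAt.fun_const_smul β)).deriv, inner_add_right, inner_smul_right_eq_smul,
      inner_smul_right_eq_smul]
  have hβ' : 0 ≤ 1 - β := sub_nonneg.2 hβ.2
  simp only [hinner]
  exact ⟨convex_Ioi (0 : ℝ) (h₀ c hc).1 (h₁ c hc).1 hβ' hβ.1 (sub_add_cancel 1 β),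
    fun s hs ↦
      convex_Ici (0 : ℝ) ((h₀ c hc).2 s hs) ((h₁ c hc).2 s hs) hβ' hβ.1 (sub_add_cancel 1 β)⟩

theorem AdvancesAtCritical.ne (h : AdvancesAtCritical x q r w) (hx : Continuous x)
    (hw : Differentiable ℝ w) {a b : ℝ} (hab : a < b) (hbr : b - a ≤ r) (heq : x a = x b) :
    w a ≠ w b := by
  intro hwab
  obtain ⟨c, hcab, hc⟩ := exists_deriv_eq_zero hab hx.continuousOn heq
  set g : ℝ → ℝ := fun s ↦ ⟪q c, w s⟫_ℝ
  have hg (s : ℝ) : HasDerivAt g ⟪q c, deriv w s⟫_ℝ s :=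
    (innerSL ℝ (q c)).hasFDerivAt.comp_hasDerivAt s (hw s).hasDerivAt
  have hgd : Differentiable ℝ g := fun s ↦ (hg s).differentiableAt
  have hmono : MonotoneOn g (Icc a b) := by
    refine monotoneOn_of_deriv_nonneg (convex_Icc a b) hgd.continuous.continuousOn
      hgd.differentiableOn fun s hs ↦ ?_
    rw [interior_Icc] at hs
    rw [(hg s).deriv]
    exact (h c hc).2 s (abs_le.2 ⟨by linarith [hs.1, hcab.2], by linarith [hs.2, hcab.1]⟩)
  have hconst : ∀ᶠ s in 𝓝 c, g s = g a := by
    filter_upwards [Icc_mem_nhds hcab.1 hcab.2] with s hs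
    refine le_antisymm ?_ (hmono (left_mem_Icc.2 hab.le) hs hs.1)
    exact (hmono hs (right_mem_Icc.2 hab.le) hs.2).trans_eq (by simp only [g, hwab])
  exact (h c hc).1.ne ((hasDerivAt_const c (g a)).congr_of_eventuallyEq hconst |>.unique (hg c))

theorem AdvancesAtCritical.deriv_prodMk_ne_zero (h : AdvancesAtCritical x q r w)
    (hx : Differentiable ℝ x) (hw : Differentiable ℝ w) (s : ℝ) :
    deriv (fun s ↦ (x s, w s)) s ≠ 0 := by
  rw [((hx s).hasDerivAt.prodMk (hw s).hasDerivAt).deriv]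
  intro h0
  obtain ⟨hx0, hw0⟩ := Prod.ext_iff.1 h0
  have hpos := (h s hx0).1
  rw [show deriv w s = 0 from hw0, inner_zero_right] at hpos
  exact hpos.false

/- A self-intersection of `(x, w)` happens within parameter distance `r`, by closeness to `w₀`, and
then contradicts `AdvancesAtCritical.ne`. -/
theorem IsUniformlyEmbedded.isPeriodicEmbedding_of_advancesAtCritical {x : ι → ℝ → ℝ}
    {w₀ w : ι → ℝ → E} {q : ι → ℝ → E} (h : IsUniformlyEmbedded (fun i s ↦ (x i s, w₀ i s)) m)
    (hx : ∀ i, ContDiff ℝ ∞ (x i)) (hw : ∀ i, ContDiff ℝ ∞ (w i))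
    (hxper : ∀ i, Periodic (x i) (2 * π)) (hwper : ∀ i, Periodic (w i) (2 * π)) (hm : 0 < m)
    (hr : r < 1) (hclose : ∀ i s, ‖w i s - w₀ i s‖ ≤ m * r / 2)
    (hadv : ∀ i, AdvancesAtCritical (x i) (q i) r (w i)) :
    IsPeriodicEmbedding fun i s ↦ (x i s, w i s) where
  contDiff i := (hx i).prodMk (hw i)
  periodic i s := by simp only [hxper i s, hwper i s]
  deriv_ne_zero i := (hadv i).deriv_prodMk_ne_zero ((hx i).differentiable (by simp))
    ((hw i).differentiable (by simp))
  eq_and_exists_of_eq {i k s s'} heq := by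
    have hnorm (i k : ι) (s s' : ℝ) (heq : (x i s, w i s) = (x k s', w k s')) :
        ‖(x i s, w₀ i s) - (x k s', w₀ k s')‖ ≤ m * r := by
      obtain ⟨hxeq, hweq⟩ := Prod.ext_iff.1 heq
      have hrw : w₀ i s - w₀ k s' = (w k s' - w₀ k s') - (w i s - w₀ i s) := by
        rw [show w i s = w k s' from hweq]
        abel
      rw [Prod.mk_sub_mk, show x i s = x k s' from hxeq, sub_self, Prod.norm_mk, norm_zero,
        max_eq_right (norm_nonneg _), hrw]
      exact (norm_sub_le_of_le (hclose k s') (hclose i s)).trans_eq (add_halves _)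
    obtain rfl : i = k := by
      by_contra hik
      exact (h.2 i k hik s s').not_gt
        ((hnorm i k s s' heq).trans_lt (mul_lt_of_lt_one_right hm hr))
    obtain ⟨j, hj⟩ := exists_int_abs_sub_add_mul_two_pi_le_pi s s'
    set s'' := s' + j * (2 * π)
    have heq' : (x i s, w i s) = (x i s'', w i s'') := by
      rw [heq, (hxper i).int_mul j, (hwper i).int_mul j]
    have hle : |s - s''| ≤ r :=
      le_of_mul_le_mul_left ((h.1 i _ _ hj).trans (hnorm i i s s'' heq')) hm
    obtain ⟨hxeq, hweq⟩ := Prod.ext_iff.1 heq'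
    have hne {a b : ℝ} := (hadv i).ne (hx i).continuous ((hw i).differentiable (by simp))
      (a := a) (b := b)
    rcases lt_trichotomy s s'' with hlt | hss | hlt
    · exact absurd hweq (hne hlt (by linarith [(abs_le.1 hle).1]) hxeq)
    · exact ⟨rfl, j, hss⟩
    · exact absurd hweq.symm (hne hlt (by linarith [(abs_le.1 hle).2]) hxeq.symm)

end Advances

/-! ### Symmetric curves in `ℝ × ℂ` -/

section Symmetric

variable {ι : Type*} {γ : ι → ℝ → ℝ × ℂ}

/-- A periodic embedding in `ℝ × ℂ` each of whose components is equivariant under reversal of the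
parameter and the half-turn `(x, w) ↦ (x, -w)`. -/
structure IsSymmetricPeriodicEmbedding (γ : ι → ℝ → ℝ × ℂ) : Prop
    extends IsPeriodicEmbedding γ where
  neg (i : ι) (s : ℝ) : γ i (-s) = ((γ i s).1, -(γ i s).2)

namespace IsSymmetricPeriodicEmbedding

theorem contDiff_fst (h : IsSymmetricPeriodicEmbedding γ) (i : ι) :
    ContDiff ℝ ∞ fun s ↦ (γ i s).1 :=
  (h.contDiff i).fst

theorem contDiff_snd (h : IsSymmetricPeriodicEmbedding γ) (i : ι) :
    ContDiff ℝ ∞ fun s ↦ (γ i s).2 :=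
  (h.contDiff i).snd

theorem periodic_fst (h : IsSymmetricPeriodicEmbedding γ) (i : ι) :
    Periodic (fun s ↦ (γ i s).1) (2 * π) :=
  (h.periodic i).comp Prod.fst

theorem periodic_snd (h : IsSymmetricPeriodicEmbedding γ) (i : ι) :
    Periodic (fun s ↦ (γ i s).2) (2 * π) :=
  (h.periodic i).comp Prod.snd

theorem even_fst (h : IsSymmetricPeriodicEmbedding γ) (i : ι) : (fun s ↦ (γ i s).1).Even :=
  fun s ↦ by simp only [h.neg i s]

theorem odd_snd (h : IsSymmetricPeriodicEmbedding γ) (i : ι) : (fun s ↦ (γ i s).2).Odd :=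
  fun s ↦ by simp only [h.neg i s]

theorem deriv_snd_ne_zero (h : IsSymmetricPeriodicEmbedding γ) (i : ι) {s : ℝ}
    (hs : deriv (fun s ↦ (γ i s).1) s = 0) :
    deriv (fun s ↦ (γ i s).2) s ≠ 0 := by
  intro h0
  refine h.deriv_ne_zero i s ?_
  have hd := ((h.contDiff_fst i).differentiable (by simp) s).hasDerivAt.prodMk
    ((h.contDiff_snd i).differentiable (by simp) s).hasDerivAt
  rw [hs, h0] at hd
  exact hd.deriv

theorem snd_eq_zero_iff (h : IsSymmetricPeriodicEmbedding γ) (i : ι) (s : ℝ) :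
    (γ i s).2 = 0 ↔ γ i s = γ i 0 ∨ γ i s = γ i π := by
  have hzero {c : ℝ} (hc : γ i (-c) = γ i c) : (γ i c).2 = 0 := by
    rw [h.neg] at hc
    exact neg_eq_self.1 (congrArg Prod.snd hc)
  have hpi : γ i (-π) = γ i π := by
    rw [← h.periodic i (-π)]
    ring_nf
  refine ⟨fun hs ↦ ?_, ?_⟩
  · have heq : γ i s = γ i (-s) := by
      rw [h.neg]
      exact Prod.ext rfl (by simp [hs])
    obtain ⟨-, j, hj⟩ := h.eq_and_exists_of_eq heq
    obtain rfl : s = j * π := by linarith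
    obtain ⟨k, rfl | rfl⟩ := j.even_or_odd'
    · left
      rw [← (h.periodic i).int_mul k 0]
      congr 1
      push_cast
      ring
    · right
      rw [← (h.periodic i).int_mul k π]
      congr 1
      push_cast
      ring
  · rintro (hs | hs) <;> rw [hs]
    exacts [hzero (by rw [neg_zero]), hzero hpi]

end IsSymmetricPeriodicEmbedding

theorem IsSymmetricPeriodicEmbedding.exists_tilt [Finite ι] (h : IsSymmetricPeriodicEmbedding γ) :
    ∃ l : ℝ, (∀ a ∈ Icc (0 : ℝ) 1, IsSymmetricPeriodicEmbedding
        fun i s ↦ ((γ i s).1 + a * l * Real.cos s, (γ i s).2)) ∧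
      ∀ i, {s ∈ Icc 0 (2 * π) | deriv (fun s ↦ (γ i s).1 + l * Real.cos s) s = 0}.Finite := by
  obtain ⟨m, hm, hγ⟩ := h.exists_isUniformlyEmbedded
  obtain ⟨l, ⟨hl0, hlm⟩, hl⟩ : ∃ l ∈ Ioo 0 (m / 4), ∀ i,
      {s ∈ Icc 0 (2 * π) | deriv (fun s ↦ (γ i s).1 + l * Real.cos s) s = 0}.Finite := by
    have hfreq : ∃ᵐ l : ℝ, l ∈ Ioo 0 (m / 4) := by
      rw [frequently_ae_mem_iff, Real.volume_Ioo, sub_zero]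
      exact (ENNReal.ofReal_pos.2 (by positivity)).ne'
    exact (hfreq.and_eventually (ae_all_iff.2 fun i ↦ ae_finite_setOf_deriv_add_mul_cos_eq_zero
      ((h.contDiff_fst i).of_le (WithTop.coe_le_coe.2 le_top)) 0 (2 * π))).exists
  refine ⟨l, fun a ha ↦ ?_, hl⟩
  have hal : |a * l| ≤ m / 4 := by
    rw [abs_of_nonneg (mul_nonneg ha.1 hl0.le)]
    exact (mul_le_of_le_one_left hl0.le ha.2).trans hlm.le
  have hadd : IsUniformlyEmbedded (fun i s ↦ γ i s + ((a * l * Real.cos s : ℝ), (0 : ℂ)))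
      (m - 2 * (m / 4)) := by
    refine hγ.add (fun _ s s' ↦ ?_) fun _ s ↦ ?_
    · rw [Prod.mk_sub_mk, sub_self, Prod.norm_mk, norm_zero, max_eq_left (norm_nonneg _),
        Real.norm_eq_abs, ← mul_sub, abs_mul]
      exact mul_le_mul hal (Real.abs_cos_sub_cos_le s s') (abs_nonneg _) (by positivity)
    · rw [Prod.norm_mk, norm_zero, max_eq_left (norm_nonneg _), Real.norm_eq_abs, abs_mul]
      exact (mul_le_of_le_one_right (abs_nonneg _) (Real.abs_cos_le_one s)).trans hal
  have heq : (fun i s ↦ γ i s + ((a * l * Real.cos s : ℝ), (0 : ℂ))) =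
      fun i s ↦ ((γ i s).1 + a * l * Real.cos s, (γ i s).2) := by
    funext i s
    exact Prod.ext rfl (add_zero _)
  rw [heq] at hadd
  refine ⟨hadd.isPeriodicEmbedding (by linarith) (fun i ↦ ?_) fun i s ↦ ?_, fun i s ↦ ?_⟩
  · exact ((h.contDiff_fst i).add (contDiff_const.mul Real.contDiff_cos)).prodMk (h.contDiff_snd i)
  · simp only [h.periodic i s, Real.cos_add_two_pi]
  · simp only [h.neg i s, Real.cos_neg]

end Symmetric

/-! ### Choice of the phase -/

section Phase

variable {ι : Type*} [Finite ι]

theorem exists_forall_re_circleExp_mul_ne_zero {ζ : ι → ℂ} (hζ : ∀ i, ζ i ≠ 0) :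
    ∃ φ : ℝ, ∀ i, (Circle.exp φ * ζ i).re ≠ 0 := by
  have hsub (i : ι) : {φ ∈ Ico 0 π | (Circle.exp φ * ζ i).re = 0}.Subsingleton := by
    rintro a ⟨ha, ha0⟩ b ⟨hb, hb0⟩
    rw [Circle.coe_exp, Complex.mul_re, Complex.exp_ofReal_mul_I_re,
      Complex.exp_ofReal_mul_I_im] at ha0 hb0
    have hre : (ζ i).re * Real.sin (a - b) = 0 := by
      rw [Real.sin_sub]
      linear_combination Real.sin a * hb0 - Real.sin b * ha0
    have him : (ζ i).im * Real.sin (a - b) = 0 := by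
      rw [Real.sin_sub]
      linear_combination Real.cos a * hb0 - Real.cos b * ha0
    have hsin : Real.sin (a - b) = 0 := by
      by_contra hne
      exact hζ i (Complex.ext ((mul_eq_zero.1 hre).resolve_right hne)
        ((mul_eq_zero.1 him).resolve_right hne))
    exact sub_eq_zero.1 ((Real.sin_eq_zero_iff_of_lt_of_lt (by linarith [ha.1, hb.2])
      (by linarith [ha.2, hb.1])).1 hsin)
  obtain ⟨φ, hφ, hφζ⟩ := (Ico_infinite Real.pi_pos).exists_notMem_finite
    (finite_iUnion fun i ↦ (hsub i).finite)
  exact ⟨φ, fun i hi ↦ hφζ (mem_iUnion.2 ⟨i, hφ, hi⟩)⟩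

theorem exists_phase_re_circleExp_mul_deriv_ne_zero {x : ι → ℝ → ℝ} {w : ι → ℝ → ℂ}
    (hxper : ∀ i, Periodic (x i) (2 * π)) (hwper : ∀ i, Periodic (w i) (2 * π))
    (hZ : ∀ i, {s ∈ Icc 0 (2 * π) | deriv (x i) s = 0}.Finite)
    (hw : ∀ i c, deriv (x i) c = 0 → deriv (w i) c ≠ 0) (N : ℝ) :
    ∃ φ : ℝ, ∀ i c, deriv (x i) c = 0 → (Circle.exp (N * x i c + φ) * deriv (w i) c).re ≠ 0 := by
  have hfin (i : ι) : Finite {s ∈ Icc 0 (2 * π) | deriv (x i) s = 0} := (hZ i).to_subtype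
  obtain ⟨φ, hφ⟩ := exists_forall_re_circleExp_mul_ne_zero
    (ι := Σ i, {s ∈ Icc 0 (2 * π) | deriv (x i) s = 0})
    (ζ := fun p ↦ Circle.exp (N * x p.1 p.2) * deriv (w p.1) p.2)
    fun p ↦ mul_ne_zero (Circle.coe_ne_zero _) (hw _ _ p.2.2.2)
  refine ⟨φ, fun i c hc ↦ ?_⟩
  obtain ⟨k, hk⟩ := exists_int_add_mul_two_pi_mem_Ico c
  have hφc := hφ ⟨i, c + k * (2 * π), Ico_subset_Icc_self hk,
    ((periodic_deriv (hxper i)).int_mul k c).trans hc⟩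
  simp only [(hxper i).int_mul k c, (periodic_deriv (hwper i)).int_mul k c] at hφc
  rwa [add_comm, Circle.exp_add, Circle.coe_mul, mul_assoc]

end Phase

/-! ### Approximation by curves tangent to the twisted contact structure -/

section Interpolation

variable {x : ℝ → ℝ} {r : ℝ}

theorem eventually_advancesAtCritical {w : ℝ → ℂ} (hxper : Periodic x (2 * π))
    (hw : ContDiff ℝ 1 w) (hwper : Periodic w (2 * π))
    (hZ : {s ∈ Icc 0 (2 * π) | deriv x s = 0}.Finite)
    (hne : ∀ c, deriv x c = 0 → deriv w c ≠ 0) :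
    ∀ᶠ r in 𝓝[>] 0, AdvancesAtCritical x (deriv w) r w := by
  have hdw := periodic_deriv hwper
  have hdwc : Continuous (deriv w) := hw.continuous_deriv_one
  have hpos (c : ℝ) (hc : deriv x c = 0) : 0 < ⟪deriv w c, deriv w c⟫_ℝ :=
    real_inner_self_pos.2 (hne c hc)
  filter_upwards [eventually_forall_abs_sub_le_of_periodic (Z := {s | deriv x s = 0})
    (P := fun c s ↦ 0 ≤ ⟪deriv w c, deriv w s⟫_ℝ) hZ
    (fun c hc k ↦ ((periodic_deriv hxper).int_mul k c).trans hc)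
    (fun c s k hcs ↦ by simpa only [hdw.int_mul k _] using hcs)
    fun c hc ↦ ((by fun_prop : Continuous fun s ↦ ⟪deriv w c, deriv w s⟫_ℝ).tendsto
      c).eventually_const_le (hpos c hc)] with r hr c hc
  exact ⟨hpos c hc, hr c hc⟩

theorem advancesAtCritical_of_deriv_eq_phaseProj {q w : ℝ → ℂ} {θ : ℝ → ℝ} (hr : 0 ≤ r)
    (hw : ∀ c, deriv x c = 0 → ∀ s, |s - c| ≤ r → deriv w s = phaseProj (θ s) (q c))
    (hθ : ∀ c, deriv x c = 0 → (Circle.exp (θ c) * q c).re ≠ 0) :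
    AdvancesAtCritical x q r w := by
  intro c hc
  refine ⟨?_, fun s hs ↦ ?_⟩
  · have := hθ c hc
    rw [hw c hc c (by simpa using hr), inner_phaseProj]
    positivity
  · rw [hw c hc s hs, inner_phaseProj]
    positivity

theorem IsSymmetricPeriodicEmbedding.exists_interpolation {ι : Type*} [Finite ι]
    {γ : ι → ℝ → ℝ × ℂ} (h : IsSymmetricPeriodicEmbedding γ)
    (hZ : ∀ i, {s ∈ Icc 0 (2 * π) | deriv (fun s ↦ (γ i s).1) s = 0}.Finite) :
    ∃ N > 0, ∃ φ : ℝ, ∃ w₁ : ι → ℝ → ℂ, (∀ i, ContDiff ℝ ∞ (w₁ i)) ∧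
      (∀ i s, (Circle.exp (N * (γ i s).1 + φ) * deriv (w₁ i) s).im = 0) ∧
      ∀ β ∈ Icc (0 : ℝ) 1, IsSymmetricPeriodicEmbedding
        fun i s ↦ ((γ i s).1, (1 - β) • (γ i s).2 + β • w₁ i s) := by
  obtain ⟨m, hm, hγ⟩ := h.exists_isUniformlyEmbedded
  obtain ⟨r, ⟨⟨hadv, happrox⟩, hr1⟩, hr0 : 0 < r⟩ :=
    ((((eventually_all.2 fun i ↦ eventually_advancesAtCritical (h.periodic_fst i)
      ((h.contDiff_snd i).of_le (by simp)) (h.periodic_snd i) (hZ i)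
      fun c ↦ h.deriv_snd_ne_zero i).and
    (eventually_all.2 fun i ↦ eventually_exists_phaseProj_approximation (h.contDiff_fst i)
      (h.periodic_fst i) (h.even_fst i) (h.contDiff_snd i) (h.periodic_snd i) (h.odd_snd i)
      (hZ i) (half_pos hm))).and
    (nhdsWithin_le_nhds (eventually_lt_nhds one_pos))).and self_mem_nhdsWithin).exists
  obtain ⟨N, hN, hN0⟩ := ((eventually_all.2 happrox).and (eventually_gt_atTop 0)).exists
  obtain ⟨φ, hφ⟩ := exists_phase_re_circleExp_mul_deriv_ne_zero h.periodic_fst h.periodic_snd hZ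
    (fun i c ↦ h.deriv_snd_ne_zero i) N
  choose w₁ hw₁ hw₁per hw₁odd hclose hleg hcrit using fun i ↦ hN i φ
  refine ⟨N, hN0, φ, w₁, hw₁, hleg, fun β hβ ↦ ⟨?_, fun i s ↦ ?_⟩⟩
  · have hw₁d (i : ι) : Differentiable ℝ (w₁ i) := (hw₁ i).differentiable (by simp)
    have hwd (i : ι) : Differentiable ℝ fun s ↦ (γ i s).2 :=
      (h.contDiff_snd i).differentiable (by simp)
    refine hγ.isPeriodicEmbedding_of_advancesAtCritical (r := r) h.contDiff_fst
      (fun i ↦ (contDiff_const.fun_smul (h.contDiff_snd i)).add (contDiff_const.fun_smul (hw₁ i)))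
      h.periodic_fst (fun i s ↦ by simp only [h.periodic i s, hw₁per i s]) hm hr1 (fun i s ↦ ?_)
      fun i ↦ (hadv i).convexCombination
        (advancesAtCritical_of_deriv_eq_phaseProj hr0.le (hcrit i) (hφ i)) (hwd i) (hw₁d i) hβ
    have hrw : (1 - β) • (γ i s).2 + β • w₁ i s - (γ i s).2 = β • (w₁ i s - (γ i s).2) := by
      module
    rw [hrw, norm_smul, Real.norm_of_nonneg hβ.1]
    exact (mul_le_of_le_one_left (norm_nonneg _) hβ.2).trans ((hclose i s).trans_eq (by ring))
  · simp only [h.neg i s, hw₁odd i s, smul_neg, neg_add]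

end Interpolation

/-! ### Twisting -/

section Twist

/-- A path of diffeomorphisms of `ℝ × ℂ` for `t ∈ [0, 1]` and `N > 0`, starting at the identity and
commuting with `(x, w) ↦ (x, -w)`. At `t = 1` it is `(x, w) ↦ (θ, e ^ (iθ) w)` with
`θ = N x + φ`. -/
def twist (N φ t : ℝ) (p : ℝ × ℂ) : ℝ × ℂ :=
  ((1 - t) * p.1 + t * (N * p.1 + φ), Circle.exp (t * (N * p.1 + φ)) * p.2)

variable {N φ t : ℝ}

theorem twist_zero (p : ℝ × ℂ) : twist N φ 0 p = p := by
  simp [twist]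

theorem contDiff_twist : ContDiff ℝ ∞ fun q : ℝ × ℝ × ℂ ↦ twist N φ q.1 q.2 :=
  ContDiff.prodMk (by fun_prop)
    ((contDiff_coe_circleExp.comp (f := fun q : ℝ × ℝ × ℂ ↦ q.1 * (N * q.2.1 + φ))
      (by fun_prop)).mul (by fun_prop))

theorem exists_differentiable_leftInverse_twist (h : (1 - t) + t * N ≠ 0) :
    ∃ Ψ : ℝ × ℂ → ℝ × ℂ, Differentiable ℝ Ψ ∧ LeftInverse Ψ (twist N φ t) := by
  have hX : ContDiff ℝ ∞ fun q : ℝ × ℂ ↦ (q.1 - t * φ) / ((1 - t) + t * N) := by fun_prop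
  refine ⟨fun q ↦ ((q.1 - t * φ) / ((1 - t) + t * N),
    Circle.exp (-(t * (N * ((q.1 - t * φ) / ((1 - t) + t * N)) + φ))) * q.2),
    (hX.prodMk ((contDiff_coe_circleExp.comp (by fun_prop)).mul contDiff_snd)).differentiable
      (by simp), fun p ↦ ?_⟩
  have hp : ((1 - t) * p.1 + t * (N * p.1 + φ) - t * φ) / ((1 - t) + t * N) = p.1 := by
    rw [div_eq_iff h]
    ring
  simp only [twist, hp]
  rw [← mul_assoc, ← Circle.coe_mul, ← Circle.exp_add, neg_add_cancel, Circle.exp_zero,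
    Circle.coe_one, one_mul]

theorem IsSymmetricPeriodicEmbedding.comp_twist {ι : Type*} {γ : ι → ℝ → ℝ × ℂ}
    (h : IsSymmetricPeriodicEmbedding γ) (hN : 0 < N) (ht : t ∈ Icc (0 : ℝ) 1) :
    IsSymmetricPeriodicEmbedding fun i s ↦ twist N φ t (γ i s) where
  toIsPeriodicEmbedding := by
    have hpos : (1 - t) + t * N ≠ 0 := by
      rcases ht.1.eq_or_lt with rfl | ht0
      · simp
      · have ht1 : 0 ≤ 1 - t := sub_nonneg.2 ht.2
        positivity
    obtain ⟨Ψ, hΨ, hinv⟩ := exists_differentiable_leftInverse_twist (φ := φ) hpos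
    exact h.comp (contDiff_twist.comp (contDiff_prodMk_right t)) hΨ hinv
  neg i s := by simp only [twist, h.neg i s, mul_neg]

end Twist

/-! ### Isotopy to a Legendrian curve -/

section Isotopy

/-- The curve `γ = (x, y + iz)` is tangent to the kernel of `dz - y dx`. -/
def IsLegendrianCurve (γ : ℝ → ℝ × ℂ) : Prop :=
  ∀ s, (deriv γ s).2.im = (γ s).2.re * (deriv γ s).1

/- For `v = e ^ (iθ) w` one has `dv = e ^ (iθ) dw + i v dθ`, so
`Im dv - Re v dθ = Im (e ^ (iθ) dw)`. -/
theorem isLegendrianCurve_twist_one {N φ : ℝ} {x : ℝ → ℝ} {w : ℝ → ℂ} (hx : Differentiable ℝ x)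
    (hw : Differentiable ℝ w) (h : ∀ s, (Circle.exp (N * x s + φ) * deriv w s).im = 0) :
    IsLegendrianCurve fun s ↦ twist N φ 1 (x s, w s) := by
  intro s
  have hθ : HasDerivAt (fun s ↦ N * x s + φ) (N * deriv x s) s :=
    ((hx s).hasDerivAt.const_mul N).add_const φ
  have hv := ((hasDerivAt_coe_circleExp _).scomp s hθ).fun_mul (hw s).hasDerivAt
  have hd := hθ.prodMk hv
  have htwist : (fun s ↦ twist N φ 1 (x s, w s)) =
      fun s ↦ (N * x s + φ, Circle.exp (N * x s + φ) * w s) := by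
    funext s
    simp [twist]
  rw [htwist]
  simp only [comp_apply] at hd
  simp only [hd.deriv]
  rw [Complex.add_im, h s, add_zero, smul_mul_assoc, Complex.smul_im, mul_right_comm,
    Complex.mul_I_im, smul_eq_mul, mul_comm]

theorem IsSymmetricPeriodicEmbedding.exists_isotopy_isLegendrianCurve {ι : Type*} [Finite ι]
    {γ : ι → ℝ → ℝ × ℂ} (h : IsSymmetricPeriodicEmbedding γ) :
    ∃ Γ : ι → ℝ × ℝ → ℝ × ℂ, (∀ i, ContDiff ℝ ∞ (Γ i)) ∧
      (∀ i t, Periodic (fun s ↦ Γ i (t, s)) (2 * π)) ∧ (∀ i s, Γ i (0, s) = γ i s) ∧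
      (∀ t ∈ Icc (0 : ℝ) 1, IsSymmetricPeriodicEmbedding fun i s ↦ Γ i (t, s)) ∧
      ∀ i, IsLegendrianCurve fun s ↦ Γ i (1, s) := by
  obtain ⟨l, htilt, hfin⟩ := h.exists_tilt
  have htilt1 := htilt 1 (right_mem_Icc.2 zero_le_one)
  simp only [one_mul] at htilt1
  obtain ⟨N, hN, φ, w₁, hw₁, hleg, hinterp⟩ := htilt1.exists_interpolation hfin
  set A : ℝ → ℝ := fun t ↦ Real.smoothTransition (2 * t) with hA
  set B : ℝ → ℝ := fun t ↦ Real.smoothTransition (2 * t - 1)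
  have hAs : ContDiff ℝ ∞ A := Real.smoothTransition.contDiff.comp (by fun_prop)
  have hBs : ContDiff ℝ ∞ B := Real.smoothTransition.contDiff.comp (by fun_prop)
  have hA1 {t : ℝ} (ht : 1 / 2 ≤ t) : A t = 1 :=
    Real.smoothTransition.one_of_one_le (by linarith)
  have hB0 {t : ℝ} (ht : t ≤ 1 / 2) : B t = 0 :=
    Real.smoothTransition.zero_of_nonpos (by linarith)
  have hB1 : B 1 = 1 := Real.smoothTransition.one_of_one_le (by norm_num)
  set η : ι → ℝ × ℝ → ℝ × ℂ := fun i q ↦ ((γ i q.2).1 + A q.1 * l * Real.cos q.2,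
    (1 - B q.1) • (γ i q.2).2 + B q.1 • w₁ i q.2) with hη
  have hηs (i : ι) : ContDiff ℝ ∞ (η i) := by
    have := h.contDiff i
    have := hw₁ i
    fun_prop
  have hηemb (t : ℝ) : IsSymmetricPeriodicEmbedding fun i s ↦ η i (t, s) := by
    rcases le_total t (1 / 2) with ht | ht
    · simpa [hη, hB0 ht] using htilt (A t)
        ⟨Real.smoothTransition.nonneg _, Real.smoothTransition.le_one _⟩
    · simpa [hη, hA1 ht] using hinterp (B t)
        ⟨Real.smoothTransition.nonneg _, Real.smoothTransition.le_one _⟩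
  refine ⟨fun i q ↦ twist N φ q.1 (η i q),
    fun i ↦ contDiff_twist.comp (_root_.contDiff_fst.prodMk (hηs i)),
    fun i t ↦ ((hηemb t).periodic i).comp (twist N φ t), fun i s ↦ ?_,
    fun t ht ↦ (hηemb t).comp_twist hN ht, fun i ↦ ?_⟩
  · simp [twist_zero, hη, hB0, hA]
  · simpa [hη, hA1 one_half_lt_one.le, hB1] using isLegendrianCurve_twist_one
      ((htilt1.contDiff_fst i).differentiable (by simp)) ((hw₁ i).differentiable (by simp)) (hleg i)

end Isotopy

/-! ### Reparametrizing an invariant curve -/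

section Reparametrization

variable {ι E : Type*} [NormedAddCommGroup E] [NormedSpace ℝ E] {γ : ι → ℝ → E}

/-- Lifts to `ℝ` of orientation-preserving diffeomorphisms of the circle `ℝ/2πℤ`; these are the
changes of parameter of `2π`-periodic curves. -/
structure IsCircleDiffeoLift (g : ℝ ≃ₜ ℝ) : Prop where
  contDiff : ContDiff ℝ ∞ g
  contDiff_symm : ContDiff ℝ ∞ g.symm
  map_add_two_pi (s : ℝ) : g (s + 2 * π) = g s + 2 * π

theorem IsCircleDiffeoLift.symm {g : ℝ ≃ₜ ℝ} (hg : IsCircleDiffeoLift g) :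
    IsCircleDiffeoLift g.symm where
  contDiff := hg.contDiff_symm
  contDiff_symm := hg.contDiff
  map_add_two_pi s := by
    rw [g.symm_apply_eq, hg.map_add_two_pi, g.apply_symm_apply]

theorem IsCircleDiffeoLift.map_add_int_mul {g : ℝ ≃ₜ ℝ} (hg : IsCircleDiffeoLift g) (s : ℝ)
    (j : ℤ) : g (s + j * (2 * π)) = g s + j * (2 * π) := by
  have hper : Periodic (fun s ↦ g s - s) (2 * π) := fun s ↦ by
    simp only [hg.map_add_two_pi, add_sub_add_right_eq_sub]
  linarith [(hper.int_mul j) s]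

theorem IsPeriodicEmbedding.reparam (h : IsPeriodicEmbedding γ) {g : ι → ℝ ≃ₜ ℝ}
    (hg : ∀ i, IsCircleDiffeoLift (g i)) : IsPeriodicEmbedding fun i s ↦ γ i (g i s) where
  contDiff i := (h.contDiff i).comp (hg i).contDiff
  periodic i s := by
    beta_reduce
    rw [(hg i).map_add_two_pi, h.periodic i]
  eq_and_exists_of_eq {i k s s'} heq := by
    obtain ⟨rfl, j, hj⟩ := h.eq_and_exists_of_eq heq
    rw [← (hg i).map_add_int_mul] at hj
    exact ⟨rfl, j, (g i).injective hj⟩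
  deriv_ne_zero i s h0 := by
    have hd : HasDerivAt (fun s ↦ γ i (g i s)) 0 s := h0 ▸
      (((h.contDiff i).comp (hg i).contDiff).differentiable (by simp) s).hasDerivAt
    rw [← (g i).symm_apply_apply s] at hd
    have hdγ := hd.scomp _ ((hg i).contDiff_symm.differentiable (by simp) (g i s)).hasDerivAt
    simp only [comp_def, Homeomorph.apply_symm_apply, smul_zero] at hdγ
    exact h.deriv_ne_zero i (g i s) hdγ.deriv

theorem IsPeriodicEmbedding.eq_of_comp_eq (h : IsPeriodicEmbedding γ) (i : ι) {σ σ' : ℝ → ℝ}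
    (hσ : Continuous σ) (hσ' : Continuous σ') (heq : ∀ s, γ i (σ s) = γ i (σ' s)) {s₀ : ℝ}
    (h₀ : σ s₀ = σ' s₀) : σ = σ' := by
  refine (AddCircle.isCoveringMap_coe (2 * π)).eq_of_comp_eq hσ hσ' (funext fun s ↦ ?_) s₀ h₀
  obtain ⟨-, j, hj⟩ := h.eq_and_exists_of_eq (heq s)
  simp [hj]

theorem IsPeriodicEmbedding.exists_continuous_lift (h : IsPeriodicEmbedding γ) (i : ι) {η : ℝ → E}
    (hη : Continuous η) (hmem : ∀ s, η s ∈ range (γ i)) {s₀ s₁ : ℝ} (h₀ : γ i s₁ = η s₀) :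
    ∃ σ : ℝ → ℝ, Continuous σ ∧ σ s₀ = s₁ ∧ ∀ s, γ i (σ s) = η s := by
  have : Fact (0 < 2 * π) := ⟨Real.two_pi_pos⟩
  set γ' : AddCircle (2 * π) → E := (h.periodic i).lift
  have hγ' : IsClosedEmbedding γ' := by
    have hcont : Continuous γ' := (h.contDiff i).continuous.quotient_lift _
    refine hcont.isClosedEmbedding ?_
    rintro ⟨s⟩ ⟨s'⟩ heq
    obtain ⟨-, j, rfl⟩ := h.eq_and_exists_of_eq heq
    exact (by simp : ((s' + j * (2 * π) : ℝ) : AddCircle (2 * π)) = s')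
  choose p hp using hmem
  have hcont : Continuous fun s ↦ (p s : AddCircle (2 * π)) :=
    hγ'.isInducing.continuous_iff.2 (hη.congr fun s ↦ (hp s).symm)
  obtain ⟨σ, ⟨hσ₀, hσ⟩, -⟩ := (AddCircle.isCoveringMap_coe (2 * π)).existsUnique_continuousMap_lifts
    ⟨_, hcont⟩ s₀ s₁ (hγ'.injective (h₀.trans (hp s₀).symm))
  exact ⟨σ, σ.continuous, hσ₀, fun s ↦ (congrArg γ' (congrFun hσ s)).trans (hp s)⟩

theorem contDiff_of_contDiff_comp {γ : ℝ → E} (hγ : ContDiff ℝ ∞ γ) (hγ' : ∀ s, deriv γ s ≠ 0)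
    {σ : ℝ → ℝ} (hσ : Continuous σ) (hcomp : ContDiff ℝ ∞ fun s ↦ γ (σ s)) : ContDiff ℝ ∞ σ := by
  refine contDiff_iff_contDiffAt.2 fun s ↦ ?_
  obtain ⟨F, hF⟩ := SeparatingDual.exists_ne_zero (R := ℝ) (hγ' (σ s))
  have hFγ : ContDiffAt ℝ ∞ (F ∘ γ) (σ s) := (F.contDiff.comp hγ).contDiffAt
  have hd : HasStrictDerivAt (F ∘ γ) (F (deriv γ (σ s))) (σ s) :=
    F.hasStrictFDerivAt.comp_hasStrictDerivAt (σ s) (hγ.contDiffAt.hasStrictDerivAt (by simp))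
  have hd' := hd.hasStrictFDerivAt_equiv hF
  refine ((hFγ.to_localInverse hd'.hasFDerivAt (by simp)).comp s
    (f := fun s ↦ F (γ (σ s))) (F.contDiff.comp hcomp).contDiffAt).congr_of_eventuallyEq ?_
  filter_upwards [hσ.continuousAt.eventually hd'.eventually_left_inverse] with u hu
  exact hu.symm

theorem map_add_of_strictAnti_of_involutive {σ : ℝ → ℝ} (hanti : StrictAnti σ)
    (hinv : Involutive σ) {c s₀ : ℝ} (hc : 0 < c) (h₀ : σ s₀ = s₀)
    (hmul : ∀ k : ℤ, ∃ j : ℤ, σ (s₀ + k * c) = s₀ + j * c) : σ (s₀ + c) = s₀ - c := by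
  have hlt_iff {a b : ℤ} : s₀ + a * c < s₀ + b * c ↔ a < b := by
    rw [add_lt_add_iff_left, mul_lt_mul_iff_left₀ hc, Int.cast_lt]
  obtain ⟨j, hj⟩ := hmul 1
  obtain ⟨k, hk⟩ := hmul (-1)
  have hj0 : j < 0 := hlt_iff.1 <| by
    rw [← hj, Int.cast_zero, zero_mul, add_zero]
    nth_rw 2 [← h₀]
    exact hanti (by simpa)
  have hj1 : -1 ≤ j := by
    by_contra! hlt
    have hk0 : 0 < k := hlt_iff.1 <| by
      rw [← hk, Int.cast_zero, zero_mul, add_zero]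
      nth_rw 1 [← h₀]
      exact hanti (by simpa)
    have hk1 : k < 1 := hlt_iff.1 <| by
      rw [← hk, ← hinv (s₀ + (1 : ℤ) * c), hj]
      exact hanti (hlt_iff.2 hlt)
    lia
  obtain rfl : j = -1 := by lia
  simpa [sub_eq_add_neg] using hj

theorem exists_isCircleDiffeoLift_of_strictAnti {σ : ℝ → ℝ} (hσ : ContDiff ℝ ∞ σ)
    (hanti : StrictAnti σ) (hinv : Involutive σ) (hper : ∀ s, σ (s + 2 * π) = σ s - 2 * π) :
    ∃ g : ℝ ≃ₜ ℝ, IsCircleDiffeoLift g ∧ ∀ u, g.symm (-u) = σ (g.symm u) := by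
  set g₀ : ℝ → ℝ := fun s ↦ (s - σ s) / 2 with hg₀
  have hg₀s : ContDiff ℝ ∞ g₀ := by fun_prop
  have hg₀d (s : ℝ) : HasDerivAt g₀ ((1 - deriv σ s) / 2) s :=
    ((hasDerivAt_id s).fun_sub (hσ.differentiable (by simp) s).hasDerivAt).div_const 2
  have hg₀d_ne (s : ℝ) : (1 - deriv σ s) / 2 ≠ 0 := by
    linarith [hanti.antitone.deriv_nonpos (x := s)]
  have hmono : StrictMono g₀ := fun s s' hs ↦ by
    simp only [hg₀]
    linarith [hanti hs]
  have hsurj : Surjective g₀ := by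
    refine hg₀s.continuous.surjective ?_ ?_
    · refine tendsto_atTop_mono' _ (f₁ := fun s ↦ (s - σ 0) / 2) ?_ ?_
      · filter_upwards [eventually_ge_atTop 0] with s hs
        simp only [hg₀]
        linarith [hanti.antitone hs]
      · exact (tendsto_atTop_add_const_right _ _ tendsto_id).atTop_div_const two_pos
    · refine tendsto_atBot_mono' _ (f₁ := fun s ↦ (s - σ 0) / 2) ?_ ?_
      · filter_upwards [eventually_le_atBot 0] with s hs
        simp only [hg₀]
        linarith [hanti.antitone hs]
      · exact (tendsto_atBot_add_const_right _ _ tendsto_id).atBot_div_const two_pos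
  set g : ℝ ≃ₜ ℝ := (hmono.orderIsoOfSurjective g₀ hsurj).toHomeomorph
  have hg (s : ℝ) : g s = (s - σ s) / 2 := rfl
  refine ⟨g, ⟨hg₀s, g.contDiff_symm_deriv hg₀d_ne hg₀d hg₀s, fun s ↦ ?_⟩, fun u ↦ ?_⟩
  · rw [hg, hg, hper]
    ring
  · have hu := hg (g.symm u)
    rw [g.apply_symm_apply] at hu
    rw [g.symm_apply_eq, hg, hinv]
    linarith

/- The lift `σ` of the involution is either increasing, and then the identity, or decreasing, and
then `s ↦ (s - σ s) / 2` is a parameter in which the involution is `u ↦ -u`. -/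
theorem IsPeriodicEmbedding.exists_isCircleDiffeoLift_neg (h : IsPeriodicEmbedding γ) (i : ι)
    {T : E → E} (hT : ContDiff ℝ ∞ T) (hinv : Involutive T)
    (hmaps : ∀ s, T (γ i s) ∈ range (γ i)) (hfix : ∃ s, T (γ i s) = γ i s)
    (hne : ∃ s, T (γ i s) ≠ γ i s) :
    ∃ g : ℝ ≃ₜ ℝ, IsCircleDiffeoLift g ∧ ∀ u, γ i (g.symm (-u)) = T (γ i (g.symm u)) := by
  obtain ⟨s₀, hs₀⟩ := hfix
  have hTγ : ContDiff ℝ ∞ fun s ↦ T (γ i s) := hT.comp (h.contDiff i)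
  obtain ⟨σ, hσc, hσ₀, hσ⟩ := h.exists_continuous_lift i hTγ.continuous hmaps hs₀.symm
  have hσs : ContDiff ℝ ∞ σ :=
    contDiff_of_contDiff_comp (h.contDiff i) (h.deriv_ne_zero i) hσc (by simpa only [hσ])
  have hσinv : Involutive σ := congrFun <| h.eq_of_comp_eq i (hσc.comp hσc) continuous_id
    (fun s ↦ by simp [hσ, hinv _]) (s₀ := s₀) (by simp [hσ₀])
  rcases hσc.strictMono_of_inj hσinv.injective with hmono | hanti
  · obtain ⟨s, hs⟩ := hne
    have hid : σ s = s := le_antisymm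
      (le_of_not_gt fun hlt ↦ (hmono hlt).not_gt (by rwa [hσinv]))
      (le_of_not_gt fun hlt ↦ (hmono hlt).not_gt (by rwa [hσinv]))
    exact absurd (by rw [← hσ, hid]) hs
  have hσ₁ : σ (s₀ + 2 * π) = s₀ - 2 * π :=
    map_add_of_strictAnti_of_involutive hanti hσinv Real.two_pi_pos hσ₀ fun k ↦
      (h.eq_and_exists_of_eq (by rw [hσ, (h.periodic i).int_mul k s₀, hs₀])).2
  refine (exists_isCircleDiffeoLift_of_strictAnti hσs hanti hσinv fun s ↦ ?_).imp
    fun g hg ↦ ⟨hg.1, fun u ↦ by rw [hg.2, hσ]⟩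
  refine congrFun (h.eq_of_comp_eq i (σ := fun s ↦ σ (s + 2 * π)) (σ' := fun s ↦ σ s - 2 * π)
    (s₀ := s₀) (by fun_prop) (by fun_prop) (fun s ↦ ?_) (by simp only [hσ₁, hσ₀])) s
  rw [hσ, (h.periodic i).sub_eq, hσ, h.periodic i]

end Reparametrization

/-! ### Maps on the unit circle in terms of the angle -/

section Circle

variable {E : Type*} [NormedAddCommGroup E] [NormedSpace ℝ E]

/-- The parametrization `s ↦ (cos s, sin s)` of the unit circle by the angle. -/
def angleMap (s : ℝ) : S1 :=
  ⟨Complex.orthonormalBasisOneI.repr (Circle.exp s), by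
    rw [mem_sphere_zero_iff_norm, LinearIsometryEquiv.norm_map, Circle.norm_coe]⟩

/-- The inverse of the identification of `ℂ` with `ℝ²`, restricted to the unit circles. -/
def complexCoord (q : S1) : Circle :=
  ⟨Complex.orthonormalBasisOneI.repr.symm (q : EuclideanSpace ℝ (Fin 2)), by
    rw [Submonoid.unitSphere, Submonoid.mem_mk, Subsemigroup.mem_mk, mem_sphere_zero_iff_norm,
      LinearIsometryEquiv.norm_map, mem_sphere_zero_iff_norm.1 q.2]⟩

theorem complexCoord_injective : Injective complexCoord := fun _ _ h ↦
  Subtype.ext (Complex.orthonormalBasisOneI.repr.symm.injective (congrArg Subtype.val h))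

theorem complexCoord_angleMap (s : ℝ) : complexCoord (angleMap s) = Circle.exp s :=
  Subtype.ext (LinearIsometryEquiv.symm_apply_apply _ _)

theorem angleMap_arg_complexCoord (q : S1) : angleMap (complexCoord q : ℂ).arg = q :=
  complexCoord_injective (by rw [complexCoord_angleMap, Circle.exp_arg])

theorem angleMap_surjective : Surjective angleMap := fun q ↦ ⟨_, angleMap_arg_complexCoord q⟩

theorem angleMap_eq_angleMap_iff {s s' : ℝ} :
    angleMap s = angleMap s' ↔ ∃ j : ℤ, s = s' + j * (2 * π) := by
  rw [← complexCoord_injective.eq_iff, complexCoord_angleMap, complexCoord_angleMap,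
    Circle.exp_eq_exp]

theorem contMDiff_angleMap : ContMDiff 𝓘(ℝ, ℝ) (𝓡 1) ∞ angleMap := by
  have := Fact.mk (finrank_euclideanSpace_fin (𝕜 := ℝ) (n := 1 + 1))
  have h : ContDiff ℝ ∞ fun s ↦ Complex.orthonormalBasisOneI.repr (Circle.exp s : ℂ) :=
    (LinearIsometryEquiv.contDiff _).comp contDiff_coe_circleExp
  exact ContMDiff.codRestrict_sphere (n := 1) h.contMDiff _

theorem contMDiff_coe_complexCoord :
    ContMDiff (𝓡 1) 𝓘(ℝ, ℂ) ∞ fun q ↦ (complexCoord q : ℂ) := by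
  have := Fact.mk (finrank_euclideanSpace_fin (𝕜 := ℝ) (n := 1 + 1))
  exact (LinearIsometryEquiv.contDiff _).contMDiff.comp
    (contMDiff_coe_sphere (E := EuclideanSpace ℝ (Fin (1 + 1))) (n := 1))

theorem mfderiv_mfderiv_angleMap {L : S1 → E} (hL : ContMDiff (𝓡 1) 𝓘(ℝ, E) ∞ L) (s a : ℝ) :
    mfderiv (𝓡 1) 𝓘(ℝ, E) L (angleMap s) (mfderiv 𝓘(ℝ, ℝ) (𝓡 1) angleMap s a) =
      a • deriv (fun s ↦ L (angleMap s)) s := by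
  have h := mfderiv_comp s (hL.mdifferentiable (by simp) _)
    (contMDiff_angleMap.mdifferentiable (by simp) s)
  rw [mfderiv_eq_fderiv] at h
  exact (DFunLike.congr_fun h a).symm.trans (fderiv_eq_smul_deriv (f := fun s ↦ L (angleMap s)) a)

theorem bijective_mfderiv_angleMap (s : ℝ) : Bijective (mfderiv 𝓘(ℝ, ℝ) (𝓡 1) angleMap s) := by
  set A : ℝ →L[ℝ] EuclideanSpace ℝ (Fin 1) := mfderiv 𝓘(ℝ, ℝ) (𝓡 1) angleMap s
  have hinj : Injective A := by
    refine (injective_iff_map_eq_zero A).2 fun a ha ↦ ?_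
    have h : mfderiv (𝓡 1) 𝓘(ℝ, ℂ) (fun q ↦ (complexCoord q : ℂ)) (angleMap s) (A a) =
        a • deriv (fun s ↦ (complexCoord (angleMap s) : ℂ)) s :=
      mfderiv_mfderiv_angleMap contMDiff_coe_complexCoord s a
    simp only [complexCoord_angleMap, (hasDerivAt_coe_circleExp s).deriv] at h
    have h0 : a • (Circle.exp s * Complex.I) = 0 := by
      rw [← h, ha]
      exact map_zero _
    exact (smul_eq_zero.1 h0).resolve_right (mul_ne_zero (Circle.coe_ne_zero _) Complex.I_ne_zero)
  have hrank : Module.finrank ℝ ℝ = Module.finrank ℝ (EuclideanSpace ℝ (Fin 1)) := by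
    rw [Module.finrank_self, finrank_euclideanSpace_fin]
  exact ⟨hinj, (LinearMap.injective_iff_surjective_of_finrank_eq_finrank hrank
    (f := A.toLinearMap)).1 hinj⟩

theorem injective_mfderiv_iff {L : S1 → E} (hL : ContMDiff (𝓡 1) 𝓘(ℝ, E) ∞ L) (s : ℝ) :
    Injective (mfderiv (𝓡 1) 𝓘(ℝ, E) L (angleMap s)) ↔
      deriv (fun s ↦ L (angleMap s)) s ≠ 0 := by
  rw [← Injective.of_comp_iff' _ (bijective_mfderiv_angleMap s)]
  set d : E := deriv (fun s ↦ L (angleMap s)) s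
  have hcomp : mfderiv (𝓡 1) 𝓘(ℝ, E) L (angleMap s) ∘ mfderiv 𝓘(ℝ, ℝ) (𝓡 1) angleMap s =
      fun a : ℝ ↦ a • d := funext (mfderiv_mfderiv_angleMap hL s)
  rw [hcomp]
  refine ⟨fun h h0 ↦ ?_, fun h ↦ smul_left_injective ℝ h⟩
  exact zero_ne_one (α := ℝ) (h (by simp only [h0, smul_zero] : (0 : ℝ) • d = (1 : ℝ) • d))

theorem exists_contMDiffAt_rightInverse_angleMap (q₀ : S1) :
    ∃ θ : S1 → ℝ, ContMDiffAt (𝓡 1) 𝓘(ℝ, ℝ) ∞ θ q₀ ∧ RightInverse θ angleMap := by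
  obtain ⟨s₀, rfl⟩ := angleMap_surjective q₀
  refine ⟨fun q ↦ s₀ + (Circle.exp (-s₀) * complexCoord q : ℂ).arg, ?_, fun q ↦ ?_⟩
  · have harg : ContDiffAt ℝ ∞ (fun z : ℂ ↦ s₀ + (Circle.exp (-s₀) * z).arg)
        (complexCoord (angleMap s₀)) := by
      rw [complexCoord_angleMap]
      have hone : (Circle.exp (-s₀) * Circle.exp s₀ : ℂ) = 1 := by
        rw [← Circle.coe_mul, ← Circle.exp_add, neg_add_cancel, Circle.exp_zero, Circle.coe_one]
      have hlog : ContDiffAt ℝ ∞ Complex.log (Circle.exp (-s₀) * Circle.exp s₀) := by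
        rw [hone]
        exact (Complex.contDiffAt_log Complex.one_mem_slitPlane).restrict_scalars ℝ
      simp only [← Complex.log_im]
      exact contDiffAt_const.add (Complex.imCLM.contDiff.contDiffAt.comp _
        (hlog.comp (𝕜 := ℝ) (Circle.exp s₀ : ℂ) (by fun_prop)))
    exact ContMDiffAt.comp (g := fun z : ℂ ↦ s₀ + (Circle.exp (-s₀) * z).arg) _
      harg.contMDiffAt (contMDiff_coe_complexCoord _)
  · refine complexCoord_injective ?_
    rw [complexCoord_angleMap, Circle.exp_add, ← Circle.coe_mul, Circle.exp_arg, Circle.exp_neg,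
      mul_inv_cancel_left]

theorem exists_contMDiff_comp_angleMap {f : ℝ × ℝ → E} (hf : ContDiff ℝ ∞ f)
    (hper : ∀ t, Periodic (fun s ↦ f (t, s)) (2 * π)) :
    ∃ F : ℝ × S1 → E, ContMDiff (𝓘(ℝ, ℝ).prod (𝓡 1)) 𝓘(ℝ, E) ∞ F ∧
      ∀ t s, F (t, angleMap s) = f (t, s) := by
  have hcongr (t : ℝ) {s s' : ℝ} (h : angleMap s = angleMap s') : f (t, s) = f (t, s') := by
    obtain ⟨j, rfl⟩ := angleMap_eq_angleMap_iff.1 h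
    exact ((hper t).int_mul j) s'
  refine ⟨fun p ↦ f (p.1, (complexCoord p.2 : ℂ).arg), fun p₀ ↦ ?_,
    fun t s ↦ hcongr t (angleMap_arg_complexCoord _)⟩
  obtain ⟨θ, hθ, hθinv⟩ := exists_contMDiffAt_rightInverse_angleMap p₀.2
  have heq (p : ℝ × S1) : f (p.1, (complexCoord p.2 : ℂ).arg) = f (p.1, θ p.2) :=
    hcongr _ ((angleMap_arg_complexCoord _).trans (hθinv _).symm)
  simp only [heq]
  exact hf.contMDiff.contMDiffAt.comp p₀
    (contMDiffAt_fst.prodMk_space (hθ.comp p₀ contMDiffAt_snd))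

end Circle

/-! ### Strongly invertible links -/

section Link

variable {n : ℕ} {L : Fin n → S1 → R3} {γ : Fin n → ℝ → ℝ × ℂ} {g : Fin n → ℝ ≃ₜ ℝ}

/-- The identification `(x, y + iz) ↦ (x, y, z)`, under which `τ` becomes `(x, w) ↦ (x, -w)`. -/
def toR3 : (ℝ × ℂ) ≃L[ℝ] R3 :=
  (ContinuousLinearEquiv.refl ℝ ℝ).prodCongr Complex.equivRealProdCLM

theorem tau_toR3 (p : ℝ × ℂ) : tau (toR3 p) = toR3 (p.1, -p.2) := rfl

theorem alphaForm_toR3 (p v : ℝ × ℂ) : alphaForm (toR3 p) (toR3 v) = v.2.im - p.2.re * v.1 := rfl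

theorem toR3_symm_tau (p : R3) : toR3.symm (tau p) = ((toR3.symm p).1, -(toR3.symm p).2) := by
  rw [ContinuousLinearEquiv.symm_apply_eq, ← tau_toR3, ContinuousLinearEquiv.apply_symm_apply]

theorem toR3_mem_xAxisSet_iff {p : ℝ × ℂ} : toR3 p ∈ xAxisSet ↔ p.2 = 0 :=
  (Complex.ext_iff (z := p.2) (w := 0)).symm

theorem involutive_tau : Involutive tau := fun p ↦ by simp [tau]

theorem contDiff_tau : ContDiff ℝ ∞ tau := by
  unfold tau
  fun_prop

theorem tau_eq_self_iff {p : R3} : tau p = p ↔ p ∈ xAxisSet := by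
  simp [tau, xAxisSet, Prod.ext_iff, neg_eq_self]

theorem isLink_iff_isPeriodicEmbedding
    (hL : ∀ i, ContMDiff (𝓡 1) 𝓘(ℝ, R3) ∞ (L i)) :
    IsLink L ↔ IsPeriodicEmbedding fun i s ↦ L i (angleMap s) := by
  refine ⟨fun h ↦ ⟨fun i ↦ ?_, fun i s ↦ ?_, fun {i k s s'} heq ↦ ?_, fun i s ↦ ?_⟩,
    fun h ↦ ⟨hL, ?_, fun i ↦ ?_⟩⟩
  · exact contMDiff_iff_contDiff.1 ((hL i).comp contMDiff_angleMap)
  · exact congrArg (L i) (angleMap_eq_angleMap_iff.2 ⟨1, by simp⟩)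
  · have hq := @h.2.1 (i, angleMap s) (k, angleMap s') heq
    exact ⟨congrArg Prod.fst hq, angleMap_eq_angleMap_iff.1 (congrArg Prod.snd hq)⟩
  · exact (injective_mfderiv_iff (hL i) s).1 (h.2.2 i _)
  · rintro ⟨i, p⟩ ⟨k, q⟩ heq
    obtain ⟨s, rfl⟩ := angleMap_surjective p
    obtain ⟨s', rfl⟩ := angleMap_surjective q
    obtain ⟨rfl, hj⟩ := h.eq_and_exists_of_eq heq
    rw [angleMap_eq_angleMap_iff.2 hj]
  · exact angleMap_surjective.forall.2 fun s ↦
      (injective_mfderiv_iff (hL i) s).2 (h.deriv_ne_zero i s)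

theorem IsStronglyInvertibleLink.exists_isSymmetricPeriodicEmbedding
    (h : IsStronglyInvertibleLink L) :
    ∃ g : Fin n → ℝ ≃ₜ ℝ, (∀ i, IsCircleDiffeoLift (g i)) ∧
      IsSymmetricPeriodicEmbedding fun i u ↦ toR3.symm (L i (angleMap ((g i).symm u))) := by
  have hemb := (isLink_iff_isPeriodicEmbedding h.1.1).1 h.1
  have hrange (i : Fin n) : range (fun s ↦ L i (angleMap s)) = range (L i) :=
    angleMap_surjective.range_comp (L i)
  have hmaps (i : Fin n) (s : ℝ) : tau (L i (angleMap s)) ∈ range fun s ↦ L i (angleMap s) := by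
    rw [hrange, ← (h.2 i).1]
    exact mem_image_of_mem tau (mem_range_self _)
  have hfix (i : Fin n) : ∃ s, tau (L i (angleMap s)) = L i (angleMap s) := by
    obtain ⟨-, ⟨q, rfl⟩, haxis⟩ := nonempty_of_encard_ne_zero (s := range (L i) ∩ xAxisSet)
      (by simp [(h.2 i).2])
    obtain ⟨s, rfl⟩ := angleMap_surjective q
    exact ⟨s, tau_eq_self_iff.2 haxis⟩
  have hne (i : Fin n) : ∃ s, tau (L i (angleMap s)) ≠ L i (angleMap s) := by
    by_contra! hall
    refine hemb.infinite_range i ((finite_of_encard_eq_coe (k := 2) (h.2 i).2).subset ?_)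
    rintro - ⟨s, rfl⟩
    exact ⟨mem_range_self _, tau_eq_self_iff.1 (hall s)⟩
  choose g hg hneg using fun i ↦
    hemb.exists_isCircleDiffeoLift_neg i contDiff_tau involutive_tau (hmaps i) (hfix i) (hne i)
  refine ⟨g, hg, (hemb.reparam fun i ↦ (hg i).symm).comp toR3.symm.contDiff
    toR3.differentiable toR3.apply_symm_apply, fun i u ↦ ?_⟩
  rw [hneg, toR3_symm_tau]

theorem IsSymmetricPeriodicEmbedding.isStronglyInvertibleLink
    (h : IsSymmetricPeriodicEmbedding γ) (hg : ∀ i, IsCircleDiffeoLift (g i))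
    (hL : ∀ i, ContMDiff (𝓡 1) 𝓘(ℝ, R3) ∞ (L i))
    (hLγ : ∀ i s, L i (angleMap s) = toR3 (γ i (g i s))) : IsStronglyInvertibleLink L := by
  have hrange (i : Fin n) : range (L i) = range fun s ↦ toR3 (γ i s) := by
    rw [← angleMap_surjective.range_comp, ← (g i).surjective.range_comp fun s ↦ toR3 (γ i s)]
    exact congrArg range (funext (hLγ i))
  refine ⟨(isLink_iff_isPeriodicEmbedding hL).2 ?_, fun i ↦ ?_⟩
  · simp only [hLγ]
    exact (h.reparam hg).comp toR3.contDiff toR3.symm.differentiable toR3.symm_apply_apply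
  rw [hrange]
  constructor
  · rw [← range_comp, ← (Equiv.neg ℝ).surjective.range_comp]
    exact congrArg range (funext fun s ↦ by simp [h.neg, tau_toR3])
  · have hpair : (range fun s ↦ toR3 (γ i s)) ∩ xAxisSet = {toR3 (γ i 0), toR3 (γ i π)} := by
      ext p
      constructor
      · rintro ⟨⟨s, rfl⟩, hs⟩
        rw [toR3_mem_xAxisSet_iff, h.snd_eq_zero_iff] at hs
        exact hs.imp (congrArg toR3) (congrArg toR3)
      · rintro (rfl | rfl)
        · exact ⟨mem_range_self _, toR3_mem_xAxisSet_iff.2 ((h.snd_eq_zero_iff i 0).2 (.inl rfl))⟩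
        · exact ⟨mem_range_self _, toR3_mem_xAxisSet_iff.2 ((h.snd_eq_zero_iff i π).2 (.inr rfl))⟩
    rw [hpair, encard_pair (toR3.injective.ne (h.ne_of_abs_sub_le i _ Real.pi_ne_zero.symm))]
    simp [abs_of_pos Real.pi_pos]

theorem isLegendrianLink_of_isLegendrianCurve (h : ∀ i, IsLegendrianCurve (γ i))
    (hγ : ∀ i, Differentiable ℝ (γ i)) (hg : ∀ i, IsCircleDiffeoLift (g i)) (hL : IsLink L)
    (hLγ : ∀ i s, L i (angleMap s) = toR3 (γ i (g i s))) : IsLegendrianLink L := by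
  refine ⟨hL, fun i ↦ angleMap_surjective.forall.2 fun s v ↦ ?_⟩
  obtain ⟨(a : ℝ), rfl⟩ := (bijective_mfderiv_angleMap s).2 v
  have hd := ((hg i).contDiff.differentiable (by simp) s).hasDerivAt
  have hderiv : HasDerivAt (fun s ↦ L i (angleMap s))
      (toR3 (deriv (g i) s • deriv (γ i) (g i s))) s := by
    simp only [hLγ]
    exact toR3.hasFDerivAt.comp_hasDerivAt s (((hγ i) (g i s)).hasDerivAt.scomp s hd)
  have hv := mfderiv_mfderiv_angleMap (hL.1 i) s a
  rw [hderiv.deriv] at hv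
  refine (congrArg (alphaForm _) hv).trans ?_
  rw [hLγ, ← map_smul, alphaForm_toR3]
  simp only [Prod.smul_snd, Prod.smul_fst, Complex.smul_im, smul_eq_mul]
  rw [h i]
  ring

theorem exists_contMDiff_angleMap_eq (hg : ∀ i, IsCircleDiffeoLift (g i))
    {Γ : Fin n → ℝ × ℝ → ℝ × ℂ} (hΓ : ∀ i, ContDiff ℝ ∞ (Γ i))
    (hper : ∀ i t, Periodic (fun s ↦ Γ i (t, s)) (2 * π)) :
    ∃ H : Fin n → ℝ × S1 → R3,
      (∀ i, ContMDiff (𝓘(ℝ, ℝ).prod (𝓡 1)) 𝓘(ℝ, R3) ∞ (H i)) ∧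
      ∀ i t s, H i (t, angleMap s) = toR3 (Γ i (t, g i s)) := by
  refine ⟨_, forall_and.1 fun i ↦ (exists_contMDiff_comp_angleMap
    (f := fun q ↦ toR3 (Γ i (q.1, g i q.2))) ?_ fun t s ↦ ?_).choose_spec⟩
  · exact toR3.contDiff.comp ((hΓ i).comp
      (contDiff_fst.prodMk ((hg i).contDiff.comp contDiff_snd)))
  · simp only [(hg i).map_add_two_pi]
    exact congrArg toR3 (hper i t _)

end Link

end

/-- Every strongly invertible link in ℝ³ is equivalent, through a smooth family of strongly
invertible links, to a strongly invertible Legendrian link: there is a smooth map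
H : ℝ × (Fin n × 𝕊¹) → ℝ³ with H(0,·) = L₀, with H(t,·) a strongly invertible link for every
t ∈ [0,1], and with H(1,·) a strongly invertible Legendrian link. -/
theorem exists_strongly_invertible_legendrian_representative {n : ℕ}
    (L₀ : Fin n → S1 → R3) (hL₀ : IsStronglyInvertibleLink L₀) :
    ∃ H : Fin n → ℝ × S1 → R3,
      (∀ i, ContMDiff ((𝓘(ℝ, ℝ)).prod (𝓡 1)) 𝓘(ℝ, R3) (⊤ : ℕ∞) (H i)) ∧
      (∀ i s, H i (0, s) = L₀ i s) ∧
      (∀ t ∈ Set.Icc (0 : ℝ) 1, IsStronglyInvertibleLink fun i s => H i (t, s)) ∧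
      IsStronglyInvertibleLegendrianLink fun i s => H i (1, s) := by
  obtain ⟨g, hg, hsymm⟩ := hL₀.exists_isSymmetricPeriodicEmbedding
  obtain ⟨Γ, hΓ, hper, hΓ0, hΓt, hΓ1⟩ := hsymm.exists_isotopy_isLegendrianCurve
  obtain ⟨H, hH, hHΓ⟩ := exists_contMDiff_angleMap_eq hg hΓ hper
  have hslice (t : ℝ) (i : Fin n) : ContMDiff (𝓡 1) 𝓘(ℝ, R3) (⊤ : ℕ∞) fun s ↦ H i (t, s) :=
    (hH i).comp (contMDiff_const.prodMk contMDiff_id)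
  have hinv (t : ℝ) (ht : t ∈ Set.Icc (0 : ℝ) 1) : IsStronglyInvertibleLink fun i s ↦ H i (t, s) :=
    (hΓt t ht).isStronglyInvertibleLink hg (hslice t) fun i s ↦ hHΓ i t s
  have hone : (1 : ℝ) ∈ Set.Icc (0 : ℝ) 1 := ⟨zero_le_one, le_rfl⟩
  have hinv1 := hinv 1 hone
  have hLegendrian : IsLegendrianLink fun i s ↦ H i (1, s) :=
    isLegendrianLink_of_isLegendrianCurve hΓ1
      (fun i ↦ ((hΓt 1 hone).contDiff i).differentiable (by simp)) hg hinv1.1 fun i ↦ hHΓ i 1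
  refine ⟨H, hH, fun i ↦ angleMap_surjective.forall.2 fun s ↦ ?_, hinv, hinv1, hLegendrian⟩
  rw [hHΓ, hΓ0]
  simp
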